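/- arXiv:2401.11863 — 2 statements merged into one kernel-verified Lean document; each statement's English description precedes it below -/
import Mathlib

section
/- Let Y be a squared-Bessel process of dimension δ ∈ (0,2) started at 1, let τ_0 = inf{t : Y_t = 0}, and let α ≥ 0. There exists a constant c_{α,δ} ∈ (0,∞) such that P_1(∫_0^{τ_0} Y_s^α ds ≥ z) ≥ c_{α,δ} z^{-(2-δ)/(2+2α)} for all z > 1. -/
open MeasureTheory Filter Set

/-- `Y` is a squared-Bessel process of dimension `δ` started at `y`, characterized via the
martingale problem: `Y_t - y - δ t` is a martingale with quadratic variation `4∫_0^t Y_s ds`. -/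
structure IsBESQ {Ω : Type*} {m : MeasurableSpace Ω} (μ : Measure Ω)
    (ℱ : Filtration ℝ m) (δ y : ℝ) (Y : ℝ → Ω → ℝ) : Prop where
  nonneg : ∀ t ω, 0 ≤ Y t ω
  cont : ∀ ω, Continuous fun t => Y t ω
  init : ∀ ω, Y 0 ω = y
  adapted : Adapted ℱ Y
  integrable_sq : ∀ t : ℝ, Integrable (fun ω => (Y t ω) ^ 2) μ
  mart : ∀ s t : ℝ, 0 ≤ s → s ≤ t →
    (μ[(fun ω => Y t ω - y - δ * t) | ℱ s]) =ᵐ[μ] fun ω => Y s ω - y - δ * s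
  qv : ∀ s t : ℝ, 0 ≤ s → s ≤ t →
    (μ[(fun ω => (Y t ω - y - δ * t) ^ 2 - 4 * ∫ u in (0:ℝ)..t, Y u ω) | ℱ s])
      =ᵐ[μ] fun ω => (Y s ω - y - δ * s) ^ 2 - 4 * ∫ u in (0:ℝ)..s, Y u ω



set_option linter.unusedSectionVars false
set_option linter.unusedVariables false

section Part1
variable {Ω : Type*} {m : MeasurableSpace Ω} {μ : Measure Ω} [IsProbabilityMeasure μ]
  {ℱ : Filtration ℝ m} {δ : ℝ} {Y : ℝ → Ω → ℝ}

lemma besq_meas (hY : IsBESQ μ ℱ δ 1 Y) (t : ℝ) : Measurable (Y t) :=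
  (hY.adapted t).mono (ℱ.le t) le_rfl

lemma besq_int (hY : IsBESQ μ ℱ δ 1 Y) (t : ℝ) : Integrable (Y t) μ := by
  have h2 : MemLp (Y t) 2 μ :=
    (memLp_two_iff_integrable_sq (besq_meas hY t).aestronglyMeasurable).2 (hY.integrable_sq t)
  exact h2.integrable (by norm_num)

lemma besq_bdd_mul {ξ Z : Ω → ℝ} (hξ : Measurable ξ) {B : ℝ} (hB : ∀ ω, |ξ ω| ≤ B)
    (hZ : Integrable Z μ) : Integrable (fun ω => ξ ω * Z ω) μ :=
  hZ.bdd_mul hξ.aestronglyMeasurable (Eventually.of_forall hB)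

lemma besq_pull {s : ℝ} {ξ Z W : Ω → ℝ} (hξ : Measurable[ℱ s] ξ) {B : ℝ} (hB : ∀ ω, |ξ ω| ≤ B)
    (hZ : Integrable Z μ) (hW : μ[Z | ℱ s] =ᵐ[μ] W) :
    ∫ ω, ξ ω * Z ω ∂μ = ∫ ω, ξ ω * W ω ∂μ := by
  have h := condExp_stronglyMeasurable_mul_of_bound (μ := μ) (ℱ.le s)
    (hξ.stronglyMeasurable) hZ B (Eventually.of_forall hB)
  have h2 : ∫ ω, (μ[ξ * Z | ℱ s]) ω ∂μ = ∫ ω, (ξ * Z) ω ∂μ := integral_condExp (ℱ.le s)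
  have h3 : ∫ ω, (μ[ξ * Z | ℱ s]) ω ∂μ = ∫ ω, ξ ω * W ω ∂μ := by
    apply integral_congr_ae
    filter_upwards [h, hW] with ω h1 h2
    rw [h1, Pi.mul_apply, h2]
  rw [← h3, h2]; rfl

lemma besq_one (hY : IsBESQ μ ℱ δ 1 Y) {s t : ℝ} (hs : 0 ≤ s) (hst : s ≤ t)
    {ξ : Ω → ℝ} (hξ : Measurable[ℱ s] ξ) {B : ℝ} (hB : ∀ ω, |ξ ω| ≤ B) :
    ∫ ω, ξ ω * Y t ω ∂μ = ∫ ω, ξ ω * Y s ω ∂μ + δ * (t - s) * ∫ ω, ξ ω ∂μ := by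
  have hξm : Measurable ξ := hξ.mono (ℱ.le s) le_rfl
  have hi : Integrable ξ μ := by
    simpa using besq_bdd_mul hξm hB (integrable_const (1:ℝ))
  have h := besq_pull (μ := μ) hξ hB (Z := fun ω => Y t ω - 1 - δ * t)
    (((besq_int hY t).sub (integrable_const _)).sub (integrable_const _)) (hY.mart s t hs hst)
  have e1 : ∀ r, ∫ ω, ξ ω * (Y r ω - 1 - δ * r) ∂μ
      = ∫ ω, ξ ω * Y r ω ∂μ - (1 + δ * r) * ∫ ω, ξ ω ∂μ := by
    intro r
    rw [← integral_const_mul, ← integral_sub (besq_bdd_mul hξm hB (besq_int hY r))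
      (hi.const_mul _)]
    congr 1; ext ω; ring
  rw [e1, e1] at h
  linarith

lemma besq_mean (hY : IsBESQ μ ℱ δ 1 Y) {t : ℝ} (ht : 0 ≤ t) :
    ∫ ω, Y t ω ∂μ = 1 + δ * t := by
  have h := besq_one hY le_rfl ht (ξ := fun _ => 1) measurable_const (B := 1) (by simp)
  simpa [hY.init] using h

lemma besq_prod_int (hY : IsBESQ μ ℱ δ 1 Y) {s t : ℝ} (hs : 0 ≤ s) (hst : s ≤ t)
    {ξ : Ω → ℝ} (hξ : Measurable ξ) {B : ℝ} (hB : ∀ ω, |ξ ω| ≤ B) :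
    Integrable (Function.uncurry (fun u ω => ξ ω * Y u ω)) ((volume.restrict (Ioc s t)).prod μ) := by
  have hYm : Measurable (Function.uncurry Y) :=
    measurable_uncurry_of_continuous_of_measurable hY.cont (besq_meas hY)
  have h0 : Integrable (Function.uncurry Y) ((volume.restrict (Ioc s t)).prod μ) := by
    rw [integrable_prod_iff hYm.aestronglyMeasurable]
    refine ⟨Eventually.of_forall fun u => besq_int hY u, ?_⟩
    have : Integrable (fun u : ℝ => 1 + δ * u) (volume.restrict (Ioc s t)) := by
      have : Continuous (fun u : ℝ => 1 + δ * u) := by fun_prop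
      exact (this.integrableOn_Icc (a := s) (b := t)).mono_set Ioc_subset_Icc_self
    refine this.congr ?_
    filter_upwards [ae_restrict_mem measurableSet_Ioc] with u hu
    rw [← besq_mean hY (hs.trans hu.1.le)]
    congr 1; ext ω
    simp [Function.uncurry, abs_of_nonneg (hY.nonneg u ω)]
  refine (h0.bdd_mul (f := fun x : ℝ × Ω => ξ x.2) (c := B)
    (hξ.comp measurable_snd).aestronglyMeasurable (Eventually.of_forall fun x => hB x.2)).congr ?_
  exact Eventually.of_forall fun x => rfl

lemma besq_intint (hY : IsBESQ μ ℱ δ 1 Y) {s t : ℝ} (hs : 0 ≤ s) (hst : s ≤ t) :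
    Integrable (fun ω => ∫ u in s..t, Y u ω) μ := by
  have h := besq_prod_int hY hs hst (ξ := fun _ => 1) measurable_const (B := 1) (by simp)
  have := h.integral_prod_right
  simpa [intervalIntegral.integral_of_le hst] using this

lemma besq_occ (hY : IsBESQ μ ℱ δ 1 Y) {s t : ℝ} (hs : 0 ≤ s) (hst : s ≤ t)
    {ξ : Ω → ℝ} (hξ : Measurable[ℱ s] ξ) {B : ℝ} (hB : ∀ ω, |ξ ω| ≤ B) :
    ∫ ω, ξ ω * (∫ u in s..t, Y u ω) ∂μ
      = (t - s) * ∫ ω, ξ ω * Y s ω ∂μ + δ * (t - s) ^ 2 / 2 * ∫ ω, ξ ω ∂μ := by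
  have hξm : Measurable ξ := hξ.mono (ℱ.le s) le_rfl
  have h := besq_prod_int hY hs hst hξm hB
  have e1 : ∫ ω, ξ ω * (∫ u in s..t, Y u ω) ∂μ = ∫ ω, (∫ u in Ioc s t, ξ ω * Y u ω) ∂μ := by
    congr 1; ext ω
    rw [intervalIntegral.integral_of_le hst, integral_const_mul]
  rw [e1, ← integral_integral_swap h, ← intervalIntegral.integral_of_le hst]
  set a := ∫ ω, ξ ω * Y s ω ∂μ
  set b := ∫ ω, ξ ω ∂μ
  have e2 : ∫ u in s..t, (∫ ω, ξ ω * Y u ω ∂μ) = ∫ u in s..t, (a + δ * (u - s) * b) := by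
    apply intervalIntegral.integral_congr
    intro u hu
    rw [uIcc_of_le hst] at hu
    exact besq_one hY hs hu.1 hξ hB
  rw [e2]
  have hd : ∀ u ∈ uIcc s t, HasDerivAt (fun u => a * u + δ * (u - s) ^ 2 / 2 * b)
      (a + δ * (u - s) * b) u := by
    intro u _
    have h1 : HasDerivAt (fun u : ℝ => (u - s) ^ 2) (2 * (u - s)) u := by
      have := ((hasDerivAt_id' u).sub_const s).fun_pow 2
      simpa using this
    have := ((hasDerivAt_id' u).const_mul a).fun_add (((h1.const_mul δ).div_const 2).mul_const b)
    exact this.congr_deriv (by ring)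
  rw [intervalIntegral.integral_eq_sub_of_hasDerivAt hd
    ((by fun_prop : Continuous fun u => a + δ * (u - s) * b).intervalIntegrable _ _)]
  ring

lemma besq_two (hY : IsBESQ μ ℱ δ 1 Y) {s t : ℝ} (hs : 0 ≤ s) (hst : s ≤ t)
    {ξ : Ω → ℝ} (hξ : Measurable[ℱ s] ξ) {B : ℝ} (hB : ∀ ω, |ξ ω| ≤ B) :
    ∫ ω, ξ ω * (Y t ω) ^ 2 ∂μ = ∫ ω, ξ ω * (Y s ω) ^ 2 ∂μ
      + (2 * δ + 4) * (t - s) * ∫ ω, ξ ω * Y s ω ∂μ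
      + (2 * δ + δ ^ 2) * (t - s) ^ 2 * ∫ ω, ξ ω ∂μ := by
  have hξm : Measurable ξ := hξ.mono (ℱ.le s) le_rfl
  have hi : Integrable ξ μ := by
    simpa using besq_bdd_mul hξm hB (integrable_const (1:ℝ))
  have hsq : ∀ r, Integrable (fun ω => (Y r ω - 1 - δ * r) ^ 2) μ := by
    intro r
    have : (fun ω => (Y r ω - 1 - δ * r) ^ 2)
        = fun ω => (Y r ω) ^ 2 - 2 * (1 + δ * r) * Y r ω + (1 + δ * r) ^ 2 := by
      ext ω; ring
    rw [this]
    exact ((hY.integrable_sq r).sub ((besq_int hY r).const_mul _)).add (integrable_const _)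
  have h := besq_pull (μ := μ) hξ hB
    (Z := fun ω => (Y t ω - 1 - δ * t) ^ 2 - 4 * ∫ u in (0:ℝ)..t, Y u ω)
    ((hsq t).sub ((besq_intint hY le_rfl (hs.trans hst)).const_mul 4)) (hY.qv s t hs hst)
  have e1 : ∀ r, 0 ≤ r → ∫ ω, ξ ω * ((Y r ω - 1 - δ * r) ^ 2 - 4 * ∫ u in (0:ℝ)..r, Y u ω) ∂μ
      = ∫ ω, ξ ω * (Y r ω) ^ 2 ∂μ - 2 * (1 + δ * r) * ∫ ω, ξ ω * Y r ω ∂μ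
        + (1 + δ * r) ^ 2 * ∫ ω, ξ ω ∂μ - 4 * ∫ ω, ξ ω * (∫ u in (0:ℝ)..r, Y u ω) ∂μ := by
    intro r hr
    have i1 := besq_bdd_mul hξm hB (hY.integrable_sq r)
    have i2 := (besq_bdd_mul hξm hB (besq_int hY r)).const_mul (2 * (1 + δ * r))
    have i3 := hi.const_mul ((1 + δ * r) ^ 2)
    have i4 := (besq_bdd_mul hξm hB (besq_intint hY le_rfl hr)).const_mul 4
    have i12 : Integrable (fun ω => ξ ω * (Y r ω) ^ 2 - 2 * (1 + δ * r) * (ξ ω * Y r ω)) μ :=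
      i1.sub i2
    have i123 : Integrable (fun ω => ξ ω * (Y r ω) ^ 2 - 2 * (1 + δ * r) * (ξ ω * Y r ω)
      + (1 + δ * r) ^ 2 * ξ ω) μ := i12.add i3
    rw [← integral_const_mul, ← integral_const_mul, ← integral_const_mul, ← integral_sub i1 i2,
      ← integral_add i12 i3, ← integral_sub i123 i4]
    congr 1; ext ω; ring
  rw [e1 t (hs.trans hst), e1 s hs] at h
  have e2 : ∫ ω, ξ ω * (∫ u in (0:ℝ)..t, Y u ω) ∂μ
      = ∫ ω, ξ ω * (∫ u in (0:ℝ)..s, Y u ω) ∂μ + ∫ ω, ξ ω * (∫ u in s..t, Y u ω) ∂μ := by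
    rw [← integral_add (besq_bdd_mul hξm hB (besq_intint hY le_rfl hs))
      (besq_bdd_mul hξm hB (besq_intint hY hs hst))]
    congr 1; ext ω
    rw [← mul_add, intervalIntegral.integral_add_adjacent_intervals] <;>
      exact (hY.cont ω).intervalIntegrable _ _
  rw [e2, besq_occ hY hs hst hξ hB, besq_one hY hs hst hξ hB] at h
  linear_combination h

end Part1

section Part2

lemma rpow_taylor_near {p : ℝ} (hp0 : 0 < p) (hp1 : p < 1) {u : ℝ} (hu : |u - 1| ≤ 1 / 2) :
    |u ^ p - 1 - p * (u - 1) - p * (p - 1) / 2 * (u - 1) ^ 2| ≤ 16 * |u - 1| ^ 3 := by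
  set r := |u - 1| with hr
  have hr0 : 0 ≤ r := abs_nonneg _
  have hs : Convex ℝ (Icc (1 - r) (1 + r)) := convex_Icc _ _
  have h1s : (1:ℝ) ∈ Icc (1 - r) (1 + r) := ⟨by linarith, by linarith⟩
  have hus : u ∈ Icc (1 - r) (1 + r) := by
    have := abs_le.1 hr.ge
    exact ⟨by linarith, by linarith⟩
  have hpos : ∀ v ∈ Icc (1 - r) (1 + r), 1 / 2 ≤ v := fun v hv => by linarith [hv.1]
  have hdist : ∀ v ∈ Icc (1 - r) (1 + r), ‖v - 1‖ ≤ r := fun v hv => by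
    rw [Real.norm_eq_abs, abs_le]; constructor <;> linarith [hv.1, hv.2]
  have hD : ∀ q : ℝ, ∀ v ∈ Icc (1 - r) (1 + r),
      HasDerivWithinAt (fun v => v ^ q) (q * v ^ (q - 1)) (Icc (1 - r) (1 + r)) v := fun q v hv =>
    (Real.hasDerivAt_rpow_const (Or.inl (by linarith [hpos v hv]))).hasDerivWithinAt
  have hD1 : ∀ v : ℝ, HasDerivWithinAt (fun v => v - 1) 1 (Icc (1 - r) (1 + r)) v := fun v =>
    ((hasDerivAt_id' v).sub_const 1).hasDerivWithinAt
  have hD2 : ∀ v : ℝ, HasDerivWithinAt (fun v => (v - 1) ^ 2) (2 * (v - 1))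
      (Icc (1 - r) (1 + r)) v := fun v => by
    simpa using (((hasDerivAt_id' v).sub_const 1).fun_pow 2).hasDerivWithinAt
  have b3 : ∀ v ∈ Icc (1 - r) (1 + r), ‖p * (p - 1) * ((p - 2) * v ^ (p - 2 - 1))‖ ≤ 16 := by
    intro v hv
    have hv2 := hpos v hv
    have e : v ^ (p - 2 - 1) ≤ 8 := by
      calc v ^ (p - 2 - 1) ≤ (1 / 2 : ℝ) ^ (p - 2 - 1) :=
            Real.rpow_le_rpow_of_nonpos (by norm_num) hv2 (by linarith)
        _ ≤ (1 / 2 : ℝ) ^ (-3 : ℝ) :=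
            Real.rpow_le_rpow_of_exponent_ge (by norm_num) (by norm_num) (by linarith)
        _ = 8 := by
            rw [Real.rpow_neg (by norm_num)]; norm_num
    have e0 : 0 ≤ v ^ (p - 2 - 1) := Real.rpow_nonneg (by linarith) _
    have ep : 0 ≤ p * (1 - p) ∧ p * (1 - p) ≤ 1 := ⟨by nlinarith, by nlinarith⟩
    rw [show p * (p - 1) * ((p - 2) * v ^ (p - 2 - 1))
      = (p * (1 - p)) * ((2 - p) * v ^ (p - 2 - 1)) by ring, Real.norm_eq_abs, abs_of_nonneg
      (mul_nonneg ep.1 (mul_nonneg (by linarith) e0))]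
    have : (2 - p) * v ^ (p - 2 - 1) ≤ 2 * 8 :=
      mul_le_mul (by linarith) e e0 (by norm_num)
    have h0 : 0 ≤ (2 - p) * v ^ (p - 2 - 1) := mul_nonneg (by linarith) e0
    nlinarith
  have b2 : ∀ v ∈ Icc (1 - r) (1 + r), ‖p * (p - 1) * (v ^ (p - 2) - 1)‖ ≤ 16 * r := by
    intro v hv
    have := hs.norm_image_sub_le_of_norm_hasDerivWithin_le
      (f := fun v => p * (p - 1) * (v ^ (p - 2) - 1))
      (fun v hv => ((hD (p - 2) v hv).sub_const 1).const_mul (p * (p - 1))) b3 h1s hv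
    simp only [Real.one_rpow, sub_self, mul_zero, sub_zero] at this
    exact this.trans (mul_le_mul_of_nonneg_left (hdist v hv) (by norm_num))
  have b1 : ∀ v ∈ Icc (1 - r) (1 + r), ‖p * (v ^ (p - 1) - 1) - p * (p - 1) * (v - 1)‖
      ≤ 16 * r * r := by
    intro v hv
    have := hs.norm_image_sub_le_of_norm_hasDerivWithin_le
      (f := fun v => p * (v ^ (p - 1) - 1) - p * (p - 1) * (v - 1))
      (f' := fun v => p * (p - 1) * (v ^ (p - 2) - 1))
      (fun v hv => ((((hD (p - 1) v hv).sub_const 1).const_mul p).fun_sub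
        ((hD1 v).const_mul (p * (p - 1)))).congr_deriv (by
          rw [show p - 1 - 1 = p - 2 by ring]; ring)) b2 h1s hv
    simp only [Real.one_rpow, sub_self, mul_zero, sub_zero] at this
    exact this.trans (mul_le_mul_of_nonneg_left (hdist v hv) (by positivity))
  have := hs.norm_image_sub_le_of_norm_hasDerivWithin_le
      (f := fun v => v ^ p - 1 - p * (v - 1) - p * (p - 1) / 2 * (v - 1) ^ 2)
      (f' := fun v => p * (v ^ (p - 1) - 1) - p * (p - 1) * (v - 1))
      (fun v hv => ((((hD p v hv).sub_const 1).fun_sub ((hD1 v).const_mul p)).fun_sub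
        ((hD2 v).const_mul (p * (p - 1) / 2))).congr_deriv (by ring)) b1 h1s hus
  simp only [Real.one_rpow, sub_self, mul_zero, sub_zero, ne_eq, OfNat.ofNat_ne_zero,
    not_false_eq_true, zero_pow] at this
  calc _ ≤ 16 * r * r * ‖u - 1‖ := this
    _ = 16 * r ^ 3 := by rw [Real.norm_eq_abs, ← hr]; ring

lemma rpow_taylor {p : ℝ} (hp0 : 0 < p) (hp1 : p < 1) {u : ℝ} (hu : 0 ≤ u) :
    |u ^ p - 1 - p * (u - 1) - p * (p - 1) / 2 * (u - 1) ^ 2| ≤ 16 * (u - 1) ^ 2 ∧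
    |u ^ p - 1 - p * (u - 1) - p * (p - 1) / 2 * (u - 1) ^ 2| ≤ 16 * |u - 1| ^ 3 := by
  have hsq : (u - 1) ^ 2 = |u - 1| ^ 2 := (sq_abs _).symm
  by_cases h : |u - 1| ≤ 1 / 2
  · have h3 := rpow_taylor_near hp0 hp1 h
    refine ⟨h3.trans ?_, h3⟩
    rw [hsq]
    have : 0 ≤ |u - 1| ^ 2 := by positivity
    nlinarith
  · push Not at h
    have hb : u ^ p ≤ 1 + p * (u - 1) := by
      have := rpow_one_add_le_one_add_mul_self (s := u - 1) (by linarith) hp0.le hp1.le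
      simpa using this
    have hu0 : 0 ≤ u ^ p := Real.rpow_nonneg hu _
    have key : |u ^ p - 1 - p * (u - 1) - p * (p - 1) / 2 * (u - 1) ^ 2| ≤ 8 * |u - 1| ^ 2 := by
      have e1 : |u ^ p - 1 - p * (u - 1)| ≤ 1 + |u - 1| := by
        rw [abs_le]
        have h1 := le_abs_self (u - 1)
        have h2 := abs_nonneg (u - 1)
        have h3 : p * (u - 1) ≤ |u - 1| := by
          calc p * (u - 1) ≤ p * |u - 1| := by gcongr
            _ ≤ 1 * |u - 1| := by gcongr
            _ = _ := one_mul _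
        constructor <;> linarith
      have e2 : |p * (p - 1) / 2 * (u - 1) ^ 2| ≤ |u - 1| ^ 2 := by
        rw [abs_mul, abs_of_nonneg (sq_nonneg (u - 1)), ← hsq]
        have : |p * (p - 1) / 2| ≤ 1 := by rw [abs_le]; constructor <;> nlinarith
        nlinarith [sq_nonneg (u - 1)]
      have := abs_sub (u ^ p - 1 - p * (u - 1)) (p * (p - 1) / 2 * (u - 1) ^ 2)
      nlinarith
    constructor
    · refine key.trans ?_
      rw [hsq]; nlinarith [sq_nonneg (|u - 1|)]
    · have : 0 ≤ |u - 1| ^ 2 := by positivity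
      nlinarith

lemma rpow_taylor_scaled {p : ℝ} (hp0 : 0 < p) (hp1 : p < 1) {ε : ℝ} (hε : 0 < ε) :
    ∃ C : ℝ, 0 < C ∧ ∀ x y : ℝ, ε ≤ x → 0 ≤ y →
      |y ^ p - x ^ p - p * x ^ (p - 1) * (y - x) - p * (p - 1) / 2 * x ^ (p - 2) * (y - x) ^ 2|
        ≤ C * (y - x) ^ 2 ∧
      |y ^ p - x ^ p - p * x ^ (p - 1) * (y - x) - p * (p - 1) / 2 * x ^ (p - 2) * (y - x) ^ 2|
        ≤ C * |y - x| ^ 3 := by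
  refine ⟨16 * ε ^ (p - 2) + 16 * ε ^ (p - 3), by positivity, fun x y hx hy => ?_⟩
  have hx0 : 0 < x := hε.trans_le hx
  obtain ⟨h2, h3⟩ := rpow_taylor hp0 hp1 (u := y / x) (by positivity)
  have hxp : 0 < x ^ p := by positivity
  have e1 : x ^ (p - 1) = x ^ p / x := by rw [Real.rpow_sub hx0]; simp
  have e2 : x ^ (p - 2) = x ^ p / x ^ 2 := by
    rw [Real.rpow_sub hx0]; norm_num
  have e3 : x ^ (p - 3) = x ^ p / x ^ 3 := by
    rw [Real.rpow_sub hx0]; norm_num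
  have m2 : x ^ (p - 2) ≤ ε ^ (p - 2) := Real.rpow_le_rpow_of_nonpos hε hx (by linarith)
  have m3 : x ^ (p - 3) ≤ ε ^ (p - 3) := Real.rpow_le_rpow_of_nonpos hε hx (by linarith)
  have n2 : 0 < ε ^ (p - 2) := by positivity
  have n3 : 0 < ε ^ (p - 3) := by positivity
  have ed : y / x - 1 = (y - x) / x := by field_simp
  have eL : y ^ p - x ^ p - p * x ^ (p - 1) * (y - x) - p * (p - 1) / 2 * x ^ (p - 2) * (y - x) ^ 2
      = x ^ p * ((y / x) ^ p - 1 - p * (y / x - 1) - p * (p - 1) / 2 * (y / x - 1) ^ 2) := by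
    rw [ed, Real.div_rpow hy hx0.le, e1, e2]
    field_simp
  rw [eL, abs_mul, abs_of_pos hxp]
  constructor
  · calc _ ≤ x ^ p * (16 * (y / x - 1) ^ 2) := by gcongr
      _ = 16 * x ^ (p - 2) * (y - x) ^ 2 := by rw [ed, e2]; field_simp
      _ ≤ _ := by
        apply mul_le_mul_of_nonneg_right _ (sq_nonneg _)
        linarith
  · calc _ ≤ x ^ p * (16 * |y / x - 1| ^ 3) := by gcongr
      _ = 16 * x ^ (p - 3) * |y - x| ^ 3 := by
        rw [ed, e3, abs_div, abs_of_pos hx0]; field_simp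
      _ ≤ _ := by
        apply mul_le_mul_of_nonneg_right _ (by positivity)
        linarith

/-- Fatou for events. -/
lemma le_measure_frequently {Ω : Type*} {m : MeasurableSpace Ω} {μ : Measure Ω}
    [IsProbabilityMeasure μ] {E : ℕ → Set Ω} (hE : ∀ n, MeasurableSet (E n)) {a : ENNReal}
    (ha : ∀ᶠ n in atTop, a ≤ μ (E n)) :
    MeasurableSet {ω | ∃ᶠ n in atTop, ω ∈ E n} ∧ a ≤ μ {ω | ∃ᶠ n in atTop, ω ∈ E n} := by
  have e : {ω | ∃ᶠ n in atTop, ω ∈ E n} = ⋂ n, ⋃ k ≥ n, E k := by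
    ext ω; simp [frequently_atTop]
  have hm : ∀ n : ℕ, MeasurableSet (⋃ k ≥ n, E k) := fun n =>
    MeasurableSet.biUnion (to_countable _) fun k _ => hE k
  rw [e]
  refine ⟨MeasurableSet.iInter hm, ?_⟩
  have ht := tendsto_measure_iInter_atTop (μ := μ) (s := fun n : ℕ => ⋃ k ≥ n, E k)
    (fun n => (hm n).nullMeasurableSet)
    (fun i j hij => biUnion_subset_biUnion_left (fun k (hk : k ≥ j) => le_trans hij hk))
    ⟨0, measure_ne_top _ _⟩
  refine ge_of_tendsto ht ?_
  filter_upwards [ha] with n hn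
  exact hn.trans (measure_mono fun ω hω => mem_biUnion (le_refl n) hω)

end Part2

section Part3
variable {Ω : Type*} {m : MeasurableSpace Ω} {μ : Measure Ω} [IsProbabilityMeasure μ]
  {ℱ : Filtration ℝ m} {δ : ℝ} {Y : ℝ → Ω → ℝ}

lemma int_on_bdd_mul {A : Set Ω} (hA : MeasurableSet A) {c Z : Ω → ℝ} (hc : Measurable c) {B : ℝ}
    (hB : ∀ ω ∈ A, |c ω| ≤ B) (hZ : Integrable Z μ) :
    IntegrableOn (fun ω => c ω * Z ω) A μ := by
  refine hZ.integrableOn.bdd_mul (c := B) hc.aestronglyMeasurable ?_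
  filter_upwards [ae_restrict_mem hA] with ω hω
  exact hB ω hω

lemma int_on_bdd {A : Set Ω} (hA : MeasurableSet A) {c : Ω → ℝ} (hc : Measurable c) {B : ℝ}
    (hB : ∀ ω ∈ A, |c ω| ≤ B) : IntegrableOn c A μ := by
  simpa using int_on_bdd_mul hA hc hB (integrable_const (1:ℝ)) (μ := μ)

/-- Conditional expectation of a random quadratic polynomial in `Y t`. -/
lemma besq_quad (hY : IsBESQ μ ℱ δ 1 Y) {s t : ℝ} (hs : 0 ≤ s) (hst : s ≤ t)
    {A : Set Ω} (hA : MeasurableSet[ℱ s] A) {c0 c1 c2 : Ω → ℝ}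
    (h0 : Measurable[ℱ s] c0) (h1 : Measurable[ℱ s] c1) (h2 : Measurable[ℱ s] c2) {B : ℝ}
    (b0 : ∀ ω ∈ A, |c0 ω| ≤ B) (b1 : ∀ ω ∈ A, |c1 ω| ≤ B) (b2 : ∀ ω ∈ A, |c2 ω| ≤ B) :
    IntegrableOn (fun ω => c0 ω + c1 ω * Y t ω + c2 ω * (Y t ω) ^ 2) A μ ∧
    ∫ ω in A, (c0 ω + c1 ω * Y t ω + c2 ω * (Y t ω) ^ 2) ∂μ
      = ∫ ω in A, (c0 ω + c1 ω * (Y s ω + δ * (t - s)) + c2 ω * ((Y s ω) ^ 2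
          + (2 * δ + 4) * (t - s) * Y s ω + (2 * δ + δ ^ 2) * (t - s) ^ 2)) ∂μ := by
  have hAm : MeasurableSet A := ℱ.le s A hA
  have hm : ∀ {c : Ω → ℝ}, Measurable[ℱ s] c → Measurable c := fun h => h.mono (ℱ.le s) le_rfl
  have ind : ∀ {c : Ω → ℝ}, Measurable[ℱ s] c → (∀ ω ∈ A, |c ω| ≤ B) →
      Measurable[ℱ s] (A.indicator c) ∧ ∀ ω, |A.indicator c ω| ≤ |B| := by
    intro c hc hb
    refine ⟨hc.indicator hA, fun ω => ?_⟩
    by_cases h : ω ∈ A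
    · rw [indicator_of_mem h]; exact (hb ω h).trans (le_abs_self B)
    · rw [indicator_of_notMem h]; simp
  have conv : ∀ c Z : Ω → ℝ, ∫ ω, A.indicator c ω * Z ω ∂μ = ∫ ω in A, c ω * Z ω ∂μ := by
    intro c Z
    rw [← integral_indicator hAm]
    congr 1; ext ω
    by_cases h : ω ∈ A <;> simp [h]
  have conv1 : ∀ c : Ω → ℝ, ∫ ω, A.indicator c ω ∂μ = ∫ ω in A, c ω ∂μ := fun c =>
    integral_indicator hAm
  have q1 := besq_one hY hs hst (ind h1 b1).1 (ind h1 b1).2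
  have q2 := besq_two hY hs hst (ind h2 b2).1 (ind h2 b2).2
  rw [conv, conv, conv1] at q1
  rw [conv, conv, conv, conv1] at q2
  have i0 := int_on_bdd (μ := μ) hAm (hm h0) b0
  have i1 := int_on_bdd (μ := μ) hAm (hm h1) b1
  have i2 := int_on_bdd (μ := μ) hAm (hm h2) b2
  have i1t := int_on_bdd_mul (μ := μ) hAm (hm h1) b1 (besq_int hY t)
  have i1s := int_on_bdd_mul (μ := μ) hAm (hm h1) b1 (besq_int hY s)
  have i2t := int_on_bdd_mul (μ := μ) hAm (hm h2) b2 (hY.integrable_sq t)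
  have i2s := int_on_bdd_mul (μ := μ) hAm (hm h2) b2 (hY.integrable_sq s)
  have i2s' := int_on_bdd_mul (μ := μ) hAm (hm h2) b2 (besq_int hY s)
  have i01 : IntegrableOn (fun ω => c0 ω + c1 ω * Y t ω) A μ := i0.add i1t
  refine ⟨i01.add i2t, ?_⟩
  rw [integral_add i01 i2t, integral_add i0 i1t, q1, q2]
  set r := t - s
  have e : ∀ ω, c0 ω + c1 ω * (Y s ω + δ * r) + c2 ω * ((Y s ω) ^ 2
          + (2 * δ + 4) * r * Y s ω + (2 * δ + δ ^ 2) * r ^ 2)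
      = c0 ω + (c1 ω * Y s ω + δ * r * c1 ω) + (c2 ω * (Y s ω) ^ 2
          + (2 * δ + 4) * r * (c2 ω * Y s ω) + (2 * δ + δ ^ 2) * r ^ 2 * c2 ω) := fun ω => by ring
  simp_rw [e]
  have k1 := i1.const_mul (δ * r)
  have k2 := i2s'.const_mul ((2 * δ + 4) * r)
  have k3 := i2.const_mul ((2 * δ + δ ^ 2) * r ^ 2)
  have j1 : IntegrableOn (fun ω => c1 ω * Y s ω + δ * r * c1 ω) A μ := i1s.add k1
  have j2 : IntegrableOn (fun ω => c2 ω * (Y s ω) ^ 2 + (2 * δ + 4) * r * (c2 ω * Y s ω)) A μ :=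
    i2s.add k2
  have j3 : IntegrableOn (fun ω => c2 ω * (Y s ω) ^ 2 + (2 * δ + 4) * r * (c2 ω * Y s ω)
    + (2 * δ + δ ^ 2) * r ^ 2 * c2 ω) A μ := j2.add k3
  have j4 : IntegrableOn (fun ω => c0 ω + (c1 ω * Y s ω + δ * r * c1 ω)) A μ := i0.add j1
  rw [integral_add j4 j3, integral_add i0 j1, integral_add j2 k3, integral_add i1s k1,
    integral_add i2s k2, integral_const_mul, integral_const_mul, integral_const_mul]

/-- `Y^2` is a submartingale. -/
lemma besq_sq_mono (hY : IsBESQ μ ℱ δ 1 Y) (hδ : 0 < δ) {s t : ℝ} (hs : 0 ≤ s) (hst : s ≤ t)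
    {A : Set Ω} (hA : MeasurableSet[ℱ s] A) :
    ∫ ω in A, (Y s ω) ^ 2 ∂μ ≤ ∫ ω in A, (Y t ω) ^ 2 ∂μ := by
  have h := besq_quad hY hs hst hA (c0 := fun _ => 0) (c1 := fun _ => 0) (c2 := fun _ => 1)
    measurable_const measurable_const measurable_const (B := 1) (by simp) (by simp) (by simp)
  simp only [zero_mul, one_mul, zero_add] at h
  rw [h.2]
  refine setIntegral_mono (hY.integrable_sq s).integrableOn ?_ ?_
  · exact (((hY.integrable_sq s).add ((besq_int hY s).const_mul _)).add
      (integrable_const _)).integrableOn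
  · intro ω
    have := hY.nonneg s ω
    have hr : 0 ≤ t - s := by linarith
    have : 0 ≤ (2 * δ + 4) * (t - s) * Y s ω := by positivity
    have : 0 ≤ (2 * δ + δ ^ 2) * (t - s) ^ 2 := by positivity
    simp only
    linarith

lemma besq_lin (hY : IsBESQ μ ℱ δ 1 Y) {s t : ℝ} (hs : 0 ≤ s) (hst : s ≤ t)
    {A : Set Ω} (hA : MeasurableSet[ℱ s] A) :
    ∫ ω in A, (Y t ω - Y s ω) ∂μ = δ * (t - s) * μ.real A := by
  have h := besq_quad hY hs hst hA (c0 := fun _ => 0) (c1 := fun _ => 1) (c2 := fun _ => 0)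
    measurable_const measurable_const measurable_const (B := 1) (by simp) (by simp) (by simp)
  simp only [zero_mul, one_mul, zero_add, add_zero] at h
  rw [integral_sub (besq_int hY t).integrableOn (besq_int hY s).integrableOn, h.2,
    integral_add (besq_int hY s).integrableOn (integrable_const _)]
  simp [mul_comm]

/-- Second-order Taylor term of `x ↦ x^p` integrates to `O(h²)`. -/
lemma besq_step (hY : IsBESQ μ ℱ δ 1 Y) (hδ : 0 < δ) (hδ2 : δ < 2) {s t : ℝ} (hs : 0 ≤ s)
    (hst : s ≤ t) {A : Set Ω} (hA : MeasurableSet[ℱ s] A) {ε K : ℝ} (hε : 0 < ε)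
    (hA1 : ∀ ω ∈ A, ε < Y s ω ∧ Y s ω < K) {p : ℝ} (hp : p = 1 - δ / 2) :
    IntegrableOn (fun ω => p * (Y s ω) ^ (p - 1) * (Y t ω - Y s ω)
        + p * (p - 1) / 2 * (Y s ω) ^ (p - 2) * (Y t ω - Y s ω) ^ 2) A μ ∧
    |∫ ω in A, (p * (Y s ω) ^ (p - 1) * (Y t ω - Y s ω)
        + p * (p - 1) / 2 * (Y s ω) ^ (p - 2) * (Y t ω - Y s ω) ^ 2) ∂μ|
      ≤ (2 * δ + δ ^ 2) * ε ^ (p - 2) * (t - s) ^ 2 := by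
  have hp0 : 0 < p := by linarith
  have hp1 : p < 1 := by linarith
  have hAm : MeasurableSet A := ℱ.le s A hA
  have hYs : Measurable[ℱ s] (Y s) := hY.adapted s
  set a : Ω → ℝ := fun ω => p * (Y s ω) ^ (p - 1) with ha
  set b : Ω → ℝ := fun ω => p * (p - 1) / 2 * (Y s ω) ^ (p - 2) with hb
  have ham : Measurable[ℱ s] a := (hYs.pow_const _).const_mul _
  have hbm : Measurable[ℱ s] b := (hYs.pow_const _).const_mul _
  have m2 : ∀ ω ∈ A, (Y s ω) ^ (p - 2) ≤ ε ^ (p - 2) := fun ω hω =>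
    Real.rpow_le_rpow_of_nonpos hε (hA1 ω hω).1.le (by linarith)
  have m1 : ∀ ω ∈ A, (Y s ω) ^ (p - 1) ≤ ε ^ (p - 1) := fun ω hω =>
    Real.rpow_le_rpow_of_nonpos hε (hA1 ω hω).1.le (by linarith)
  have ba : ∀ ω ∈ A, |a ω| ≤ ε ^ (p - 1) := fun ω hω => by
    have h0 : 0 ≤ (Y s ω) ^ (p - 1) := Real.rpow_nonneg (hY.nonneg s ω) _
    rw [ha, abs_mul, abs_of_nonneg h0, abs_of_pos hp0]
    have := m1 ω hω
    nlinarith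
  have hpp : |p * (p - 1) / 2| ≤ 1 := by rw [abs_le]; constructor <;> nlinarith
  have bb : ∀ ω ∈ A, |b ω| ≤ ε ^ (p - 2) := fun ω hω => by
    have h0 : 0 ≤ (Y s ω) ^ (p - 2) := Real.rpow_nonneg (hY.nonneg s ω) _
    rw [hb, abs_mul, abs_of_nonneg h0]
    have := m2 ω hω
    nlinarith [abs_nonneg (p * (p - 1) / 2)]
  have bY : ∀ ω ∈ A, |Y s ω| ≤ |K| := fun ω hω => by
    rw [abs_of_nonneg (hY.nonneg s ω)]; exact (hA1 ω hω).2.le.trans (le_abs_self K)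
  set a' := ε ^ (p - 1)
  set b' := ε ^ (p - 2)
  have apos : 0 ≤ a' := by positivity
  have bpos : 0 ≤ b' := by positivity
  set B := a' * |K| + a' + 2 * b' * |K| + b' + b' * |K| ^ 2 with hB
  have p1 : 0 ≤ a' * |K| := by positivity
  have p2 : 0 ≤ b' * |K| := by positivity
  have p3 : 0 ≤ b' * |K| ^ 2 := by positivity
  have h := besq_quad hY hs hst hA
    (c0 := fun ω => -(a ω * Y s ω) + b ω * (Y s ω * Y s ω))
    (c1 := fun ω => a ω - 2 * (b ω * Y s ω)) (c2 := b)
    ((ham.mul hYs).neg.add (hbm.mul (hYs.mul hYs)))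
    (ham.sub ((hbm.mul hYs).const_mul 2)) hbm (B := B) ?_ ?_ ?_
  rotate_left
  · intro ω hω
    have e1 : |a ω * Y s ω| ≤ a' * |K| := by
      rw [abs_mul]; exact mul_le_mul (ba ω hω) (bY ω hω) (abs_nonneg _) apos
    have e2 : |b ω * (Y s ω * Y s ω)| ≤ b' * |K| ^ 2 := by
      rw [abs_mul (b ω), abs_mul (Y s ω), ← sq]
      exact mul_le_mul (bb ω hω) (pow_le_pow_left₀ (abs_nonneg _) (bY ω hω) 2) (by positivity) bpos
    refine (abs_add_le _ _).trans ?_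
    rw [abs_neg]; linarith
  · intro ω hω
    have e2 : |b ω * Y s ω| ≤ b' * |K| := by
      rw [abs_mul]; exact mul_le_mul (bb ω hω) (bY ω hω) (abs_nonneg _) bpos
    refine (abs_sub _ _).trans ?_
    rw [abs_mul 2 (b ω * Y s ω), abs_two]; linarith [ba ω hω]
  · intro ω hω
    linarith [bb ω hω]
  have e1 : (fun ω => -(a ω * Y s ω) + b ω * (Y s ω * Y s ω) + (a ω - 2 * (b ω * Y s ω)) * Y t ω
      + b ω * (Y t ω) ^ 2) = fun ω => a ω * (Y t ω - Y s ω) + b ω * (Y t ω - Y s ω) ^ 2 := by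
    ext ω; ring
  rw [e1] at h
  refine ⟨h.1, ?_⟩
  rw [h.2]
  set r := t - s
  have e2 : ∀ ω ∈ A, -(a ω * Y s ω) + b ω * (Y s ω * Y s ω)
      + (a ω - 2 * (b ω * Y s ω)) * (Y s ω + δ * r)
      + b ω * ((Y s ω) ^ 2 + (2 * δ + 4) * r * Y s ω + (2 * δ + δ ^ 2) * r ^ 2)
      = b ω * ((2 * δ + δ ^ 2) * r ^ 2) := by
    intro ω hω
    have hpos : 0 < Y s ω := hε.trans (hA1 ω hω).1
    have e : (Y s ω) ^ (p - 1) = (Y s ω) ^ (p - 2) * Y s ω := by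
      rw [← Real.rpow_add_one hpos.ne']; congr 1; ring
    have hδp : δ = 2 - 2 * p := by linarith
    simp only [ha, hb, e]
    rw [hδp]
    ring
  rw [setIntegral_congr_fun hAm e2]
  have hbd : ∀ ω ∈ A, ‖b ω * ((2 * δ + δ ^ 2) * r ^ 2)‖ ≤ (2 * δ + δ ^ 2) * b' * r ^ 2 := by
    intro ω hω
    have : 0 ≤ (2 * δ + δ ^ 2) * r ^ 2 := by positivity
    rw [norm_mul, Real.norm_eq_abs, Real.norm_eq_abs, abs_of_nonneg this]
    nlinarith [bb ω hω]
  have := norm_setIntegral_le_of_norm_le_const (μ := μ) (measure_lt_top μ A) hbd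
  rw [Real.norm_eq_abs] at this
  refine this.trans ?_
  have h1 : μ.real A ≤ 1 := measureReal_le_one
  have : 0 ≤ (2 * δ + δ ^ 2) * b' * r ^ 2 := by positivity
  nlinarith [measureReal_nonneg (μ := μ) (s := A)]

lemma besq_sqincr (hY : IsBESQ μ ℱ δ 1 Y) (hδ : 0 < δ) {s t : ℝ} (hs : 0 ≤ s)
    (hst : s ≤ t) {A : Set Ω} (hA : MeasurableSet[ℱ s] A) {K : ℝ}
    (hA1 : ∀ ω ∈ A, Y s ω < K) (hK : 0 ≤ K) :
    ∫ ω in A, (Y t ω - Y s ω) ^ 2 ∂μ ≤ 4 * K * (t - s) + (2 * δ + δ ^ 2) * (t - s) ^ 2 := by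
  have hAm : MeasurableSet A := ℱ.le s A hA
  have hYs : Measurable[ℱ s] (Y s) := hY.adapted s
  have h := besq_quad hY hs hst hA (c0 := fun ω => (Y s ω) ^ 2)
    (c1 := fun ω => -2 * Y s ω) (c2 := fun ω => 1) (hYs.pow_const 2) (hYs.const_mul _)
    measurable_const (B := K ^ 2 + 2 * K + 1) ?_ ?_ ?_
  rotate_left
  · intro ω hω
    rw [abs_of_nonneg (sq_nonneg _)]
    nlinarith [hY.nonneg s ω, hA1 ω hω]
  · intro ω hω
    rw [abs_mul, abs_of_nonneg (hY.nonneg s ω)]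
    norm_num
    nlinarith [hY.nonneg s ω, hA1 ω hω]
  · intro ω hω
    simp only [abs_one]; nlinarith
  have e1 : (fun ω => (Y s ω) ^ 2 + -2 * Y s ω * Y t ω + 1 * (Y t ω) ^ 2)
      = fun ω => (Y t ω - Y s ω) ^ 2 := by ext ω; ring
  rw [e1] at h
  rw [h.2]
  have hr : 0 ≤ t - s := by linarith
  have hbd : ∀ ω ∈ A, ‖(Y s ω) ^ 2 + -2 * Y s ω * (Y s ω + δ * (t - s)) + 1 * ((Y s ω) ^ 2
      + (2 * δ + 4) * (t - s) * Y s ω + (2 * δ + δ ^ 2) * (t - s) ^ 2)‖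
      ≤ 4 * K * (t - s) + (2 * δ + δ ^ 2) * (t - s) ^ 2 := by
    intro ω hω
    have h0 := hY.nonneg s ω
    have h1 := hA1 ω hω
    rw [show (Y s ω) ^ 2 + -2 * Y s ω * (Y s ω + δ * (t - s)) + 1 * ((Y s ω) ^ 2
      + (2 * δ + 4) * (t - s) * Y s ω + (2 * δ + δ ^ 2) * (t - s) ^ 2)
      = 4 * Y s ω * (t - s) + (2 * δ + δ ^ 2) * (t - s) ^ 2 by ring, Real.norm_eq_abs,
      abs_of_nonneg (by positivity)]
    nlinarith
  have := norm_setIntegral_le_of_norm_le_const (μ := μ) (measure_lt_top μ A) hbd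
  refine (le_abs_self _).trans (this.trans ?_)
  have h1 : μ.real A ≤ 1 := measureReal_le_one
  have : 0 ≤ 4 * K * (t - s) + (2 * δ + δ ^ 2) * (t - s) ^ 2 := by positivity
  nlinarith [measureReal_nonneg (μ := μ) (s := A)]

end Part3

section Part4

lemma gmeas_e {Ω : Type*} {m' : MeasurableSpace Ω} {f : Ω → ℝ} (hf : Measurable f) (c : ℝ) :
    MeasurableSet {ω | f ω ≤ c} := measurableSet_le hf measurable_const

lemma gmeas_t {Ω : Type*} {m' : MeasurableSpace Ω} {f : Ω → ℝ} (hf : Measurable f) (c : ℝ) :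
    MeasurableSet {ω | f ω < c} := measurableSet_lt hf measurable_const

lemma gmeas_e' {Ω : Type*} {m' : MeasurableSpace Ω} {f : Ω → ℝ} (hf : Measurable f) (c : ℝ) :
    MeasurableSet {ω | c ≤ f ω} := measurableSet_le measurable_const hf

lemma gmeas_t' {Ω : Type*} {m' : MeasurableSpace Ω} {f : Ω → ℝ} (hf : Measurable f) (c : ℝ) :
    MeasurableSet {ω | c < f ω} := measurableSet_lt measurable_const hf

lemma gmeas_diff {Ω : Type*} {m' : MeasurableSpace Ω} {f g : Ω → ℝ} (hf : Measurable f)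
    (hg : Measurable g) : Measurable (fun ω => |f ω - g ω|) := (hf.sub hg).abs

variable {Ω : Type*} {m : MeasurableSpace Ω} {μ : Measure Ω} [IsProbabilityMeasure μ]
  {ℱ : Filtration ℝ m} {δ : ℝ} {Y : ℝ → Ω → ℝ}

/-- The walk sampled on the grid `i * h` has stayed in `(ε, K)` with increments at most `η`. -/
def AliveB (Y : ℝ → Ω → ℝ) (ε K η h : ℝ) : ℕ → Set Ω
  | 0 => univ
  | i + 1 => AliveB Y ε K η h i ∩ {ω | |Y ((i + 1 : ℕ) * h) ω - Y (i * h) ω| ≤ η ∧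
      ε < Y ((i + 1 : ℕ) * h) ω ∧ Y ((i + 1 : ℕ) * h) ω < K}

/-- A jump larger than `η` on the next step. -/
def JumpB (Y : ℝ → Ω → ℝ) (ε K η h : ℝ) (i : ℕ) : Set Ω :=
  AliveB Y ε K η h i ∩ {ω | η < |Y ((i + 1 : ℕ) * h) ω - Y (i * h) ω|}

/-- Exit below on the next step. -/
def LowB (Y : ℝ → Ω → ℝ) (ε K η h : ℝ) (i : ℕ) : Set Ω :=
  AliveB Y ε K η h i ∩ {ω | |Y ((i + 1 : ℕ) * h) ω - Y (i * h) ω| ≤ η ∧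
    Y ((i + 1 : ℕ) * h) ω ≤ ε}

/-- Exit above on the next step. -/
def UpB (Y : ℝ → Ω → ℝ) (ε K η h : ℝ) (i : ℕ) : Set Ω :=
  AliveB Y ε K η h i ∩ {ω | |Y ((i + 1 : ℕ) * h) ω - Y (i * h) ω| ≤ η ∧
    ε < Y ((i + 1 : ℕ) * h) ω ∧ K ≤ Y ((i + 1 : ℕ) * h) ω}

lemma grid_mono {h : ℝ} (hh : 0 ≤ h) (i : ℕ) : (i : ℝ) * h ≤ ((i + 1 : ℕ) : ℝ) * h := by
  push_cast; nlinarith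

lemma alive_meas (hY : IsBESQ μ ℱ δ 1 Y) (ε K η : ℝ) {h : ℝ} (hh : 0 ≤ h) (i : ℕ) :
    MeasurableSet[ℱ (i * h)] (AliveB Y ε K η h i) := by
  induction i with
  | zero => exact MeasurableSet.univ
  | succ i ih =>
    have hle := ℱ.mono (grid_mono hh i)
    have m1 : Measurable[ℱ ((i + 1 : ℕ) * h)] (Y ((i + 1 : ℕ) * h)) := hY.adapted _
    have m0 : Measurable[ℱ ((i + 1 : ℕ) * h)] (Y (i * h)) := (hY.adapted (i * h)).mono hle le_rfl
    refine (hle _ ih).inter (MeasurableSet.inter ?_ (MeasurableSet.inter ?_ ?_))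
    · exact gmeas_e (gmeas_diff m1 m0) _
    · exact gmeas_t' m1 _
    · exact gmeas_t m1 _

lemma jump_meas (hY : IsBESQ μ ℱ δ 1 Y) (ε K η : ℝ) {h : ℝ} (hh : 0 ≤ h) (i : ℕ) :
    MeasurableSet[ℱ ((i + 1 : ℕ) * h)] (JumpB Y ε K η h i) ∧
    MeasurableSet[ℱ ((i + 1 : ℕ) * h)] (LowB Y ε K η h i) ∧
    MeasurableSet[ℱ ((i + 1 : ℕ) * h)] (UpB Y ε K η h i) := by
  have hle := ℱ.mono (grid_mono hh i)
  have ih := hle _ (alive_meas hY ε K η hh i)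
  have m1 : Measurable[ℱ ((i + 1 : ℕ) * h)] (Y ((i + 1 : ℕ) * h)) := hY.adapted _
  have m0 : Measurable[ℱ ((i + 1 : ℕ) * h)] (Y (i * h)) := (hY.adapted (i * h)).mono hle le_rfl
  have d := (gmeas_diff m1 m0)
  refine ⟨ih.inter ?_, ih.inter (MeasurableSet.inter ?_ ?_),
    ih.inter (MeasurableSet.inter ?_ (MeasurableSet.inter ?_ ?_))⟩
  · exact gmeas_t' d _
  · exact gmeas_e d _
  · exact gmeas_e m1 _
  · exact gmeas_e d _
  · exact gmeas_t' m1 _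
  · exact gmeas_e' m1 _

lemma alive_mem (hY : IsBESQ μ ℱ δ 1 Y) {ε K η h : ℝ} (hε : ε < 1) (hK : 1 < K) (i : ℕ) :
    ∀ ω ∈ AliveB Y ε K η h i, ε < Y (i * h) ω ∧ Y (i * h) ω < K := by
  intro ω hω
  cases i with
  | zero => simp [hY.init, hε, hK]
  | succ i => exact hω.2.2

lemma alive_anti (Y : ℝ → Ω → ℝ) (ε K η h : ℝ) : Antitone (AliveB Y ε K η h) :=
  antitone_nat_of_succ_le fun _ => inter_subset_left

lemma disjoint_of_alive {ε K η h : ℝ} {D : ℕ → Set Ω}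
    (h1 : ∀ i, D i ⊆ AliveB Y ε K η h i) (h2 : ∀ i, Disjoint (D i) (AliveB Y ε K η h (i + 1))) :
    Pairwise (Function.onFun Disjoint D) := by
  have key : ∀ i j, i < j → Disjoint (D i) (D j) := fun i j hij =>
    (h2 i).mono_right ((h1 j).trans (alive_anti Y ε K η h hij))
  intro i j hij
  rcases lt_or_gt_of_ne hij with h | h
  · exact key i j h
  · exact (key j i h).symm

lemma jump_disj (Y : ℝ → Ω → ℝ) (ε K η h : ℝ) :
    Pairwise (Function.onFun Disjoint (JumpB Y ε K η h)) :=
  disjoint_of_alive (fun _ => inter_subset_left) fun i => by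
    rw [disjoint_left]; intro ω h1 h2
    exact absurd h1.2 (not_lt.2 h2.2.1)

lemma low_disj (Y : ℝ → Ω → ℝ) (ε K η h : ℝ) :
    Pairwise (Function.onFun Disjoint (LowB Y ε K η h)) :=
  disjoint_of_alive (fun _ => inter_subset_left) fun i => by
    rw [disjoint_left]; intro ω h1 h2
    exact absurd h1.2.2 (not_le.2 h2.2.2.1)

lemma up_disj (Y : ℝ → Ω → ℝ) (ε K η h : ℝ) :
    Pairwise (Function.onFun Disjoint (UpB Y ε K η h)) :=
  disjoint_of_alive (fun _ => inter_subset_left) fun i => by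
    rw [disjoint_left]; intro ω h1 h2
    exact absurd h1.2.2.2 (not_le.2 h2.2.2.2)

lemma alive_split (Y : ℝ → Ω → ℝ) (ε K η h : ℝ) (i : ℕ) :
    AliveB Y ε K η h i = AliveB Y ε K η h (i + 1) ∪ (JumpB Y ε K η h i ∪
      (LowB Y ε K η h i ∪ UpB Y ε K η h i)) := by
  ext ω
  constructor
  · intro hω
    by_cases h1 : |Y ((i + 1 : ℕ) * h) ω - Y (i * h) ω| ≤ η
    · by_cases h2 : Y ((i + 1 : ℕ) * h) ω ≤ ε
      · exact Or.inr (Or.inr (Or.inl ⟨hω, h1, h2⟩))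
      · by_cases h3 : K ≤ Y ((i + 1 : ℕ) * h) ω
        · exact Or.inr (Or.inr (Or.inr ⟨hω, h1, not_le.1 h2, h3⟩))
        · exact Or.inl ⟨hω, h1, not_le.1 h2, not_le.1 h3⟩
    · exact Or.inr (Or.inl ⟨hω, not_le.1 h1⟩)
  · rintro (h | h | h | h) <;> exact h.1

lemma alive_split_int (hY : IsBESQ μ ℱ δ 1 Y) (ε K η : ℝ) {h : ℝ} (hh : 0 ≤ h) (i : ℕ)
    {g : Ω → ℝ} (hg : Integrable g μ) :
    ∫ ω in AliveB Y ε K η h i, g ω ∂μ = ∫ ω in AliveB Y ε K η h (i + 1), g ω ∂μ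
      + (∫ ω in JumpB Y ε K η h i, g ω ∂μ + (∫ ω in LowB Y ε K η h i, g ω ∂μ
        + ∫ ω in UpB Y ε K η h i, g ω ∂μ)) := by
  obtain ⟨mJ, mL, mU⟩ := jump_meas hY ε K η hh i
  have mJ := ℱ.le _ _ mJ
  have mL := ℱ.le _ _ mL
  have mU := ℱ.le _ _ mU
  rw [alive_split Y ε K η h i, setIntegral_union _ (mJ.union (mL.union mU)) hg.integrableOn
    hg.integrableOn, setIntegral_union _ (mL.union mU) hg.integrableOn hg.integrableOn,
    setIntegral_union _ mU hg.integrableOn hg.integrableOn]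
  · rw [disjoint_left]; intro ω h1 h2
    exact absurd h1.2.2 (not_le.2 h2.2.2.1)
  · rw [disjoint_left]; intro ω h1 h2
    rcases h2 with h2 | h2
    · exact absurd h1.2 (not_lt.2 h2.2.1)
    · exact absurd h1.2 (not_lt.2 h2.2.1)
  · rw [disjoint_left]; intro ω h1 h2
    rcases h2 with h2 | h2 | h2
    · exact absurd h2.2 (not_lt.2 h1.2.1)
    · exact absurd h2.2.2 (not_le.2 h1.2.2.1)
    · exact absurd h2.2.2.2 (not_le.2 h1.2.2.2)

/-- Discrete optional stopping (Dynkin) identity. -/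
lemma dynkin (hY : IsBESQ μ ℱ δ 1 Y) (ε K η : ℝ) {h : ℝ} (hh : 0 ≤ h)
    (g : ℝ → ℝ) (hg : ∀ t, Integrable (fun ω => g (Y t ω)) μ) (n : ℕ) :
    ∫ ω in AliveB Y ε K η h n, g (Y (n * h) ω) ∂μ
      + ∑ i ∈ Finset.range n, (∫ ω in JumpB Y ε K η h i, g (Y ((i + 1 : ℕ) * h) ω) ∂μ
        + (∫ ω in LowB Y ε K η h i, g (Y ((i + 1 : ℕ) * h) ω) ∂μ
        + ∫ ω in UpB Y ε K η h i, g (Y ((i + 1 : ℕ) * h) ω) ∂μ))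
    = g 1 + ∑ i ∈ Finset.range n, ∫ ω in AliveB Y ε K η h i,
        (g (Y ((i + 1 : ℕ) * h) ω) - g (Y (i * h) ω)) ∂μ := by
  induction n with
  | zero => simp [AliveB, hY.init]
  | succ n ih =>
    rw [Finset.sum_range_succ, Finset.sum_range_succ, ← add_assoc (g 1), ← ih,
      integral_sub (hg _).integrableOn (hg _).integrableOn,
      alive_split_int hY ε K η hh n (hg ((n + 1 : ℕ) * h))]
    ring

end Part4

section Part5
variable {Ω : Type*} {m : MeasurableSpace Ω} {μ : Measure Ω} [IsProbabilityMeasure μ]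
  {ℱ : Filtration ℝ m} {δ : ℝ} {Y : ℝ → Ω → ℝ}

lemma setInt_le_const {S : Set Ω} (hS : MeasurableSet S) {f : Ω → ℝ} (hf : Integrable f μ) {C : ℝ}
    (h : ∀ ω ∈ S, f ω ≤ C) : ∫ ω in S, f ω ∂μ ≤ C * μ.real S := by
  have := setIntegral_mono_on hf.integrableOn (integrable_const C).integrableOn hS h
  simpa [mul_comm] using this

lemma const_le_setInt {S : Set Ω} (hS : MeasurableSet S) {f : Ω → ℝ} (hf : Integrable f μ) {C : ℝ}
    (h : ∀ ω ∈ S, C ≤ f ω) : C * μ.real S ≤ ∫ ω in S, f ω ∂μ := by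
  have := setIntegral_mono_on (integrable_const C).integrableOn hf.integrableOn hS h
  simpa [mul_comm] using this

lemma sq_int' (hY : IsBESQ μ ℱ δ 1 Y) (K t : ℝ) :
    Integrable (fun ω => 1 + K ^ 2 + (Y t ω) ^ 2) μ :=
  (integrable_const _).add (hY.integrable_sq t)

lemma rpow_le_one_add {p x : ℝ} (hp0 : 0 < p) (hp1 : p < 1) (hx : 0 ≤ x) : x ^ p ≤ 1 + x := by
  have := rpow_one_add_le_one_add_mul_self (s := x - 1) (by linarith) hp0.le hp1.le
  simp only [add_sub_cancel] at this
  nlinarith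

lemma rpow_int (hY : IsBESQ μ ℱ δ 1 Y) {p : ℝ} (hp0 : 0 < p) (hp1 : p < 1) (t : ℝ) :
    Integrable (fun ω => (Y t ω) ^ p) μ := by
  refine ((integrable_const (1:ℝ)).add (besq_int hY t)).mono'
    ((besq_meas hY t).pow_const p).aestronglyMeasurable (Eventually.of_forall fun ω => ?_)
  rw [Real.norm_eq_abs, abs_of_nonneg (Real.rpow_nonneg (hY.nonneg t ω) p)]
  exact rpow_le_one_add hp0 hp1 (hY.nonneg t ω)

lemma sqdiff_int (hY : IsBESQ μ ℱ δ 1 Y) (s t : ℝ) :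
    Integrable (fun ω => (Y t ω - Y s ω) ^ 2) μ := by
  refine (((hY.integrable_sq t).const_mul 2).add ((hY.integrable_sq s).const_mul 2)).mono'
    (((besq_meas hY t).sub (besq_meas hY s)).pow_const 2).aestronglyMeasurable
    (Eventually.of_forall fun ω => ?_)
  rw [Real.norm_eq_abs, abs_of_nonneg (sq_nonneg _)]
  simp only [Pi.add_apply]
  nlinarith [sq_nonneg (Y t ω + Y s ω)]

lemma jump_bound (hY : IsBESQ μ ℱ δ 1 Y) (hδ : 0 < δ) (ε K η : ℝ) {h : ℝ} (hh : 0 ≤ h)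
    {i N : ℕ} (hi : i < N) :
    ∫ ω in JumpB Y ε K η h i, (1 + K ^ 2 + (Y ((i + 1 : ℕ) * h) ω) ^ 2) ∂μ
      ≤ ∫ ω in JumpB Y ε K η h i, (1 + K ^ 2 + (Y (N * h) ω) ^ 2) ∂μ := by
  rw [integral_add (integrable_const _) (hY.integrable_sq _).integrableOn,
    integral_add (integrable_const _) (hY.integrable_sq _).integrableOn]
  refine add_le_add le_rfl ?_
  exact besq_sq_mono hY hδ (by positivity)
    (mul_le_mul_of_nonneg_right (Nat.cast_le.2 (Nat.succ_le_of_lt hi)) hh) (jump_meas hY ε K η hh i).1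

lemma step_err (hY : IsBESQ μ ℱ δ 1 Y) (hδ : 0 < δ) (hδ2 : δ < 2) {ε K η h : ℝ} (hε : 0 < ε)
    (hε1 : ε < 1) (hK : 1 < K) (hη : 0 < η) (hh : 0 ≤ h) {p : ℝ} (hp : p = 1 - δ / 2)
    {C : ℝ} (hC0 : 0 < C) (hC : ∀ x y : ℝ, ε ≤ x → 0 ≤ y →
      |y ^ p - x ^ p - p * x ^ (p - 1) * (y - x) - p * (p - 1) / 2 * x ^ (p - 2) * (y - x) ^ 2|
        ≤ C * (y - x) ^ 2 ∧
      |y ^ p - x ^ p - p * x ^ (p - 1) * (y - x) - p * (p - 1) / 2 * x ^ (p - 2) * (y - x) ^ 2|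
        ≤ C * |y - x| ^ 3) {i N : ℕ} (hi : i < N) :
    |∫ ω in AliveB Y ε K η h i, ((Y ((i + 1 : ℕ) * h) ω) ^ p - (Y (i * h) ω) ^ p) ∂μ|
      ≤ (2 * δ + δ ^ 2) * ε ^ (p - 2) * h ^ 2 + C * η * (4 * K * h + (2 * δ + δ ^ 2) * h ^ 2)
        + C * ∫ ω in JumpB Y ε K η h i, (1 + K ^ 2 + (Y (N * h) ω) ^ 2) ∂μ := by
  have hp0 : 0 < p := by linarith
  have hp1 : p < 1 := by linarith
  set A := AliveB Y ε K η h i with hAdef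
  set J := JumpB Y ε K η h i with hJdef
  set s : ℝ := i * h with hs
  set t : ℝ := (i + 1 : ℕ) * h with ht
  have hs0 : 0 ≤ s := by positivity
  have hst : s ≤ t := grid_mono hh i
  have hts : t - s = h := by rw [hs, ht]; push_cast; ring
  have hA : MeasurableSet[ℱ s] A := alive_meas hY ε K η hh i
  have hAm : MeasurableSet A := ℱ.le s A hA
  have hJm : MeasurableSet J := ℱ.le _ J (jump_meas hY ε K η hh i).1
  have hmem : ∀ ω ∈ A, ε < Y s ω ∧ Y s ω < K := alive_mem hY hε1 hK i
  obtain ⟨hQi, hQ⟩ := besq_step hY hδ hδ2 hs0 hst hA hε hmem hp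
  have hS := besq_sqincr hY hδ hs0 hst hA (fun ω hω => (hmem ω hω).2) (by linarith : 0 ≤ K)
  rw [hts] at hQ hS
  set Q : Ω → ℝ := fun ω => p * (Y s ω) ^ (p - 1) * (Y t ω - Y s ω)
        + p * (p - 1) / 2 * (Y s ω) ^ (p - 2) * (Y t ω - Y s ω) ^ 2 with hQdef
  have hF : Integrable (fun ω => (Y t ω) ^ p - (Y s ω) ^ p) μ :=
    (rpow_int hY hp0 hp1 t).sub (rpow_int hY hp0 hp1 s)
  have hd := sqdiff_int hY s t
  have hdJ : Integrable (J.indicator fun ω => (Y t ω - Y s ω) ^ 2) μ := hd.indicator hJm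
  have hR : IntegrableOn (fun ω => (Y t ω) ^ p - (Y s ω) ^ p - Q ω) A μ :=
    hF.integrableOn.sub hQi
  have e1 : ∫ ω in A, ((Y t ω) ^ p - (Y s ω) ^ p) ∂μ
      = ∫ ω in A, Q ω ∂μ + ∫ ω in A, ((Y t ω) ^ p - (Y s ω) ^ p - Q ω) ∂μ := by
    rw [← integral_add hQi hR]
    congr 1; ext ω; ring
  have e2 : ‖∫ ω in A, ((Y t ω) ^ p - (Y s ω) ^ p - Q ω) ∂μ‖
      ≤ ∫ ω in A, (C * η * (Y t ω - Y s ω) ^ 2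
        + C * J.indicator (fun ω => (Y t ω - Y s ω) ^ 2) ω) ∂μ := by
    refine norm_integral_le_of_norm_le
      ((hd.integrableOn.const_mul _).add (hdJ.integrableOn.const_mul _)) ?_
    filter_upwards [ae_restrict_mem hAm] with ω hω
    obtain ⟨c2, c3⟩ := hC (Y s ω) (Y t ω) (hmem ω hω).1.le (hY.nonneg t ω)
    have eq : (Y t ω) ^ p - (Y s ω) ^ p - Q ω = (Y t ω) ^ p - (Y s ω) ^ p
      - p * (Y s ω) ^ (p - 1) * (Y t ω - Y s ω)
      - p * (p - 1) / 2 * (Y s ω) ^ (p - 2) * (Y t ω - Y s ω) ^ 2 := by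
      simp only [hQdef]; ring
    rw [eq, Real.norm_eq_abs]
    by_cases hj : ω ∈ J
    · rw [indicator_of_mem hj]
      have : 0 ≤ C * η * (Y t ω - Y s ω) ^ 2 := by positivity
      linarith
    · rw [indicator_of_notMem hj]
      have hle : |Y t ω - Y s ω| ≤ η := by
        by_contra hc
        exact hj ⟨hω, not_le.1 hc⟩
      refine c3.trans ?_
      rw [mul_zero, add_zero, pow_succ, sq_abs, mul_assoc, mul_comm _ (|Y t ω - Y s ω|)]
      have := sq_nonneg (Y t ω - Y s ω)
      gcongr
  have e3 : ∫ ω in A, (C * η * (Y t ω - Y s ω) ^ 2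
        + C * J.indicator (fun ω => (Y t ω - Y s ω) ^ 2) ω) ∂μ
      = C * η * ∫ ω in A, (Y t ω - Y s ω) ^ 2 ∂μ + C * ∫ ω in J, (Y t ω - Y s ω) ^ 2 ∂μ := by
    rw [integral_add (hd.integrableOn.const_mul _) (hdJ.integrableOn.const_mul _),
      integral_const_mul, integral_const_mul, setIntegral_indicator hJm,
      inter_eq_self_of_subset_right (show J ⊆ A from inter_subset_left)]
  have e4 : ∫ ω in J, (Y t ω - Y s ω) ^ 2 ∂μ
      ≤ ∫ ω in J, (1 + K ^ 2 + (Y (N * h) ω) ^ 2) ∂μ := by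
    refine le_trans ?_ (jump_bound hY hδ ε K η hh hi)
    refine setIntegral_mono_on hd.integrableOn (sq_int' hY K t).integrableOn hJm fun ω hω => ?_
    have h1 := (hmem ω hω.1)
    have h2 := hY.nonneg t ω
    have h3 := hY.nonneg s ω
    nlinarith
  rw [e1]
  rw [Real.norm_eq_abs, e3] at e2
  refine (abs_add_le _ _).trans ?_
  have e5 : C * η * ∫ ω in A, (Y t ω - Y s ω) ^ 2 ∂μ
    ≤ C * η * (4 * K * h + (2 * δ + δ ^ 2) * h ^ 2) := by gcongr
  have e6 := mul_le_mul_of_nonneg_left e4 hC0.le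
  linarith

/-- Total error from jumps. -/
noncomputable def errB (μ : Measure Ω) (Y : ℝ → Ω → ℝ) (ε K η h : ℝ) (N : ℕ) : ℝ :=
  ∑ i ∈ Finset.range N, ∫ ω in JumpB Y ε K η h i, (1 + K ^ 2 + (Y (N * h) ω) ^ 2) ∂μ

lemma total_prob (hY : IsBESQ μ ℱ δ 1 Y) (ε K η : ℝ) {h : ℝ} (hh : 0 ≤ h) (N : ℕ) :
    μ.real (AliveB Y ε K η h N) + (∑ i ∈ Finset.range N, μ.real (JumpB Y ε K η h i)
      + (∑ i ∈ Finset.range N, μ.real (LowB Y ε K η h i)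
      + ∑ i ∈ Finset.range N, μ.real (UpB Y ε K η h i))) = 1 := by
  have := dynkin hY ε K η hh (fun _ => 1) (fun _ => integrable_const _) N
  simpa [Finset.sum_add_distrib] using this

lemma jump_sum (hY : IsBESQ μ ℱ δ 1 Y) (ε K η : ℝ) {h : ℝ} (hh : 0 ≤ h) (N : ℕ) :
    ∑ i ∈ Finset.range N, μ.real (JumpB Y ε K η h i) ≤ errB μ Y ε K η h N := by
  refine Finset.sum_le_sum fun i _ => ?_
  have hJm := ℱ.le _ _ (jump_meas hY ε K η hh i).1
  have := const_le_setInt hJm (sq_int' hY K (N * h)) (C := 1) (fun ω _ => by nlinarith [sq_nonneg K])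
  simpa using this

lemma exit_time (hY : IsBESQ μ ℱ δ 1 Y) (hδ : 0 < δ) {ε K η h : ℝ}
    (hε1 : ε < 1) (hK : 1 < K) (hη1 : η ≤ 1) (hh : 0 ≤ h) (N : ℕ) :
    δ * (N * h) * μ.real (AliveB Y ε K η h N) ≤ K + 1 + errB μ Y ε K η h N := by
  have hd := dynkin hY ε K η hh (fun x => x) (fun t => besq_int hY t) N
  have hL : ∀ i ∈ Finset.range N, δ * h * μ.real (AliveB Y ε K η h N)
      ≤ ∫ ω in AliveB Y ε K η h i, (Y ((i + 1 : ℕ) * h) ω - Y (i * h) ω) ∂μ := by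
    intro i hi
    rw [besq_lin hY (by positivity) (grid_mono hh i) (alive_meas hY ε K η hh i)]
    rw [show ((i + 1 : ℕ) : ℝ) * h - i * h = h by push_cast; ring]
    have := measureReal_mono (μ := μ) (alive_anti Y ε K η h (Finset.mem_range.1 hi).le)
    gcongr
  have hL2 := Finset.sum_le_sum hL
  rw [Finset.sum_const, Finset.card_range, nsmul_eq_mul] at hL2
  have hR : ∀ i ∈ Finset.range N, (∫ ω in JumpB Y ε K η h i, Y ((i + 1 : ℕ) * h) ω ∂μ
        + (∫ ω in LowB Y ε K η h i, Y ((i + 1 : ℕ) * h) ω ∂μ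
        + ∫ ω in UpB Y ε K η h i, Y ((i + 1 : ℕ) * h) ω ∂μ))
      ≤ ∫ ω in JumpB Y ε K η h i, (1 + K ^ 2 + (Y (N * h) ω) ^ 2) ∂μ
        + (K + 1) * (μ.real (LowB Y ε K η h i) + μ.real (UpB Y ε K η h i)) := by
    intro i hi
    obtain ⟨mJ, mL, mU⟩ := jump_meas hY ε K η hh i
    have mJ := ℱ.le _ _ mJ
    have mL := ℱ.le _ _ mL
    have mU := ℱ.le _ _ mU
    have a1 : ∫ ω in JumpB Y ε K η h i, Y ((i + 1 : ℕ) * h) ω ∂μ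
        ≤ ∫ ω in JumpB Y ε K η h i, (1 + K ^ 2 + (Y (N * h) ω) ^ 2) ∂μ := by
      refine le_trans ?_ (jump_bound hY hδ ε K η hh (Finset.mem_range.1 hi))
      refine setIntegral_mono (besq_int hY _).integrableOn (sq_int' hY K _).integrableOn fun ω => ?_
      simp only
      nlinarith [sq_nonneg (Y ((i + 1 : ℕ) * h) ω - 1), sq_nonneg K]
    have a2 := setInt_le_const mL (besq_int hY ((i + 1 : ℕ) * h)) (C := K + 1)
      (fun ω hω => by linarith [hω.2.2])
    have a3 := setInt_le_const mU (besq_int hY ((i + 1 : ℕ) * h)) (C := K + 1)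
      (fun ω hω => by
        have := (alive_mem hY hε1 hK i ω hω.1).2
        have := (abs_le.1 hω.2.1).2
        linarith)
    linarith
  have hR2 := Finset.sum_le_sum hR
  have e : ∑ i ∈ Finset.range N, (∫ ω in JumpB Y ε K η h i, (1 + K ^ 2 + (Y (N * h) ω) ^ 2) ∂μ
        + (K + 1) * (μ.real (LowB Y ε K η h i) + μ.real (UpB Y ε K η h i)))
      = ∑ i ∈ Finset.range N, ∫ ω in JumpB Y ε K η h i, (1 + K ^ 2 + (Y (N * h) ω) ^ 2) ∂μ
        + (K + 1) * (∑ i ∈ Finset.range N, μ.real (LowB Y ε K η h i)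
          + ∑ i ∈ Finset.range N, μ.real (UpB Y ε K η h i)) := by
    rw [Finset.sum_add_distrib, ← Finset.mul_sum, Finset.sum_add_distrib]
  rw [e] at hR2
  have hA := setInt_le_const (ℱ.le _ _ (alive_meas hY ε K η hh N)) (besq_int hY (N * h)) (C := K + 1)
    (fun ω hω => by linarith [(alive_mem hY hε1 hK N ω hω).2])
  have htot := total_prob hY ε K η hh N
  have hJ0 : 0 ≤ ∑ i ∈ Finset.range N, μ.real (JumpB Y ε K η h i) :=
    Finset.sum_nonneg fun i _ => measureReal_nonneg
  unfold errB
  have : (K + 1) * (μ.real (AliveB Y ε K η h N) + (∑ i ∈ Finset.range N, μ.real (LowB Y ε K η h i)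
      + ∑ i ∈ Finset.range N, μ.real (UpB Y ε K η h i))) ≤ (K + 1) * 1 := by
    apply mul_le_mul_of_nonneg_left _ (by linarith)
    linarith
  nlinarith

lemma exit_scale (hY : IsBESQ μ ℱ δ 1 Y) (hδ : 0 < δ) (hδ2 : δ < 2) {ε K η h : ℝ} (hε : 0 < ε)
    (hε1 : ε < 1) (hK : 1 < K) (hη : 0 < η) (hη1 : η ≤ 1) (hh : 0 ≤ h) {p : ℝ}
    (hp : p = 1 - δ / 2)
    {C : ℝ} (hC0 : 0 < C) (hC : ∀ x y : ℝ, ε ≤ x → 0 ≤ y →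
      |y ^ p - x ^ p - p * x ^ (p - 1) * (y - x) - p * (p - 1) / 2 * x ^ (p - 2) * (y - x) ^ 2|
        ≤ C * (y - x) ^ 2 ∧
      |y ^ p - x ^ p - p * x ^ (p - 1) * (y - x) - p * (p - 1) / 2 * x ^ (p - 2) * (y - x) ^ 2|
        ≤ C * |y - x| ^ 3) (N : ℕ) {R : ℝ}
    (hR : R = N * ((2 * δ + δ ^ 2) * ε ^ (p - 2) * h ^ 2
        + C * η * (4 * K * h + (2 * δ + δ ^ 2) * h ^ 2)) + C * errB μ Y ε K η h N) :
    1 ≤ ε ^ p + (K + 1) ^ p * ∑ i ∈ Finset.range N, μ.real (UpB Y ε K η h i)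
      + K ^ p * μ.real (AliveB Y ε K η h N) + errB μ Y ε K η h N + R ∧
    K ^ p * ∑ i ∈ Finset.range N, μ.real (UpB Y ε K η h i) ≤ 1 + R := by
  have hp0 : 0 < p := by linarith
  have hp1 : p < 1 := by linarith
  have hd := dynkin hY ε K η hh (fun x => x ^ p) (fun t => rpow_int hY hp0 hp1 t) N
  have hE : |∑ i ∈ Finset.range N, ∫ ω in AliveB Y ε K η h i,
        ((Y ((i + 1 : ℕ) * h) ω) ^ p - (Y (i * h) ω) ^ p) ∂μ| ≤ R := by
    refine (Finset.abs_sum_le_sum_abs _ _).trans ?_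
    refine (Finset.sum_le_sum fun i hi => step_err hY hδ hδ2 hε hε1 hK hη hh hp hC0 hC
      (Finset.mem_range.1 hi)).trans ?_
    rw [Finset.sum_add_distrib, Finset.sum_const, Finset.card_range, nsmul_eq_mul,
      ← Finset.mul_sum, hR]
    exact le_rfl
  obtain ⟨hE1, hE2⟩ := abs_le.1 hE
  simp only [Real.one_rpow] at hd
  rw [Finset.sum_add_distrib, Finset.sum_add_distrib] at hd
  have mono : ∀ {x y : ℝ}, 0 ≤ x → x ≤ y → x ^ p ≤ y ^ p := fun h1 h2 =>
    Real.rpow_le_rpow h1 h2 hp0.le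
  have mA := ℱ.le _ _ (alive_meas hY ε K η hh N)
  have mL := fun i => ℱ.le _ _ (jump_meas hY ε K η hh i).2.1
  have mU := fun i => ℱ.le _ _ (jump_meas hY ε K η hh i).2.2
  have pos : ∀ (S : Set Ω) t, 0 ≤ ∫ ω in S, (Y t ω) ^ p ∂μ := fun S t =>
    integral_nonneg fun ω => Real.rpow_nonneg (hY.nonneg t ω) p
  constructor
  · have hA := setInt_le_const mA (rpow_int hY hp0 hp1 (N * h)) (C := K ^ p)
      (fun ω hω => mono (hY.nonneg _ _) (alive_mem hY hε1 hK N ω hω).2.le)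
    have hJ : ∑ i ∈ Finset.range N, ∫ ω in JumpB Y ε K η h i, (Y ((i + 1 : ℕ) * h) ω) ^ p ∂μ
        ≤ errB μ Y ε K η h N := by
      refine Finset.sum_le_sum fun i hi => ?_
      refine le_trans ?_ (jump_bound hY hδ ε K η hh (Finset.mem_range.1 hi))
      refine setIntegral_mono (rpow_int hY hp0 hp1 _).integrableOn
        (sq_int' hY K _).integrableOn fun ω => ?_
      simp only
      have h1 := rpow_le_one_add hp0 hp1 (hY.nonneg ((i + 1 : ℕ) * h) ω)
      nlinarith [sq_nonneg (Y ((i + 1 : ℕ) * h) ω - 1)]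
    have hLow : ∑ i ∈ Finset.range N, ∫ ω in LowB Y ε K η h i, (Y ((i + 1 : ℕ) * h) ω) ^ p ∂μ
        ≤ ε ^ p * ∑ i ∈ Finset.range N, μ.real (LowB Y ε K η h i) := by
      rw [Finset.mul_sum]
      exact Finset.sum_le_sum fun i _ => setInt_le_const (mL i) (rpow_int hY hp0 hp1 _)
        (fun ω hω => mono (hY.nonneg _ _) hω.2.2)
    have hUp : ∑ i ∈ Finset.range N, ∫ ω in UpB Y ε K η h i, (Y ((i + 1 : ℕ) * h) ω) ^ p ∂μ
        ≤ (K + 1) ^ p * ∑ i ∈ Finset.range N, μ.real (UpB Y ε K η h i) := by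
      rw [Finset.mul_sum]
      refine Finset.sum_le_sum fun i _ => setInt_le_const (mU i) (rpow_int hY hp0 hp1 _)
        (fun ω hω => mono (hY.nonneg _ _) ?_)
      have := (alive_mem hY hε1 hK i ω hω.1).2
      have := (abs_le.1 hω.2.1).2
      linarith
    have htot := total_prob hY ε K η hh N
    have hL1 : ∑ i ∈ Finset.range N, μ.real (LowB Y ε K η h i) ≤ 1 := by
      have h1 : 0 ≤ ∑ i ∈ Finset.range N, μ.real (JumpB Y ε K η h i) :=
        Finset.sum_nonneg fun i _ => measureReal_nonneg
      have h2 : 0 ≤ ∑ i ∈ Finset.range N, μ.real (UpB Y ε K η h i) :=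
        Finset.sum_nonneg fun i _ => measureReal_nonneg
      have h3 : 0 ≤ μ.real (AliveB Y ε K η h N) := measureReal_nonneg
      linarith
    have hεp : 0 < ε ^ p := by positivity
    have := mul_le_mul_of_nonneg_left hL1 hεp.le
    linarith
  · have hUp : K ^ p * ∑ i ∈ Finset.range N, μ.real (UpB Y ε K η h i)
        ≤ ∑ i ∈ Finset.range N, ∫ ω in UpB Y ε K η h i, (Y ((i + 1 : ℕ) * h) ω) ^ p ∂μ := by
      rw [Finset.mul_sum]
      exact Finset.sum_le_sum fun i _ => const_le_setInt (mU i) (rpow_int hY hp0 hp1 _)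
        (fun ω hω => mono (by linarith) hω.2.2.2)
    have h1 := Finset.sum_nonneg (s := Finset.range N) fun i _ =>
      pos (JumpB Y ε K η h i) ((i + 1 : ℕ) * h)
    have h2 := Finset.sum_nonneg (s := Finset.range N) fun i _ =>
      pos (LowB Y ε K η h i) ((i + 1 : ℕ) * h)
    have h3 := pos (AliveB Y ε K η h N) (N * h)
    linarith

end Part5

section Part6
variable {Ω : Type*} {m : MeasurableSpace Ω} {μ : Measure Ω} [IsProbabilityMeasure μ]
  {ℱ : Filtration ℝ m} {δ : ℝ} {Y : ℝ → Ω → ℝ}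

/-- Uniform continuity of a continuous path on a compact time interval. -/
lemma path_unif {f : ℝ → ℝ} (hf : Continuous f) (T : ℝ) {r : ℝ} (hr : 0 < r) :
    ∃ d > 0, ∀ s ∈ Icc (0:ℝ) T, ∀ t ∈ Icc (0:ℝ) T, |s - t| ≤ d → |f s - f t| < r := by
  have := isCompact_Icc.uniformContinuousOn_of_continuous (hf.continuousOn (s := Icc (0:ℝ) T))
  rw [Metric.uniformContinuousOn_iff] at this
  obtain ⟨d, hd, h⟩ := this r hr
  refine ⟨d / 2, by positivity, fun s hs t ht hst => ?_⟩
  have := h s hs t ht (by rw [Real.dist_eq]; linarith)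
  rwa [Real.dist_eq] at this

lemma grid_mem {T : ℝ} (hT : 0 ≤ T) {i N : ℕ} (hi : i ≤ N) (hN : 0 < N) :
    (i : ℝ) * (T / N) ∈ Icc (0:ℝ) T := by
  refine ⟨by positivity, ?_⟩
  have hN' : (0:ℝ) < N := by exact_mod_cast hN
  have : (i:ℝ) ≤ N := by exact_mod_cast hi
  calc (i : ℝ) * (T / N) ≤ N * (T / N) := by gcongr
    _ = T := by field_simp

lemma mesh_tendsto (T : ℝ) : Tendsto (fun N : ℕ => T / (N : ℝ)) atTop (nhds 0) :=
  tendsto_const_div_atTop_nhds_zero_nat T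

lemma err_tendsto (hY : IsBESQ μ ℱ δ 1 Y) (ε K : ℝ) {η T : ℝ} (hη : 0 < η) (hT : 0 < T) :
    Tendsto (fun N : ℕ => errB μ Y ε K η (T / N) N) atTop (nhds 0) := by
  set g : Ω → ℝ := fun ω => 1 + K ^ 2 + (Y T ω) ^ 2 with hg
  have hgi : Integrable g μ := sq_int' hY K T
  set S : ℕ → Set Ω := fun N => ⋃ i ∈ Finset.range N, JumpB Y ε K η (T / N) i with hS
  have hJm : ∀ N i, MeasurableSet (JumpB Y ε K η (T / (N:ℕ)) i) := fun N i =>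
    ℱ.le _ _ (jump_meas hY ε K η (by positivity) i).1
  have hSm : ∀ N, MeasurableSet (S N) := fun N =>
    Finset.measurableSet_biUnion _ fun i _ => hJm N i
  have h1 : ∀ᶠ N : ℕ in atTop, ∫ ω, (S N).indicator g ω ∂μ = errB μ Y ε K η (T / N) N := by
    filter_upwards [eventually_gt_atTop 0] with N hN
    have hN' : (N:ℝ) ≠ 0 := by positivity
    rw [integral_indicator (hSm N), hS, errB]
    simp only
    rw [integral_biUnion_finset _ (fun i _ => hJm N i)
      (fun i _ j _ hij => jump_disj Y ε K η (T / N) hij) (fun i _ => hgi.integrableOn)]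
    rw [mul_div_cancel₀ _ hN']
  refine Tendsto.congr' h1 ?_
  have h0 : (0:ℝ) = ∫ ω, (0:ℝ) ∂μ := by simp
  rw [h0]
  refine tendsto_integral_of_dominated_convergence g
    (fun N => (hgi.indicator (hSm N)).aestronglyMeasurable) hgi (fun N => ?_) ?_
  · refine Eventually.of_forall fun ω => ?_
    refine (norm_indicator_le_norm_self _ _).trans ?_
    rw [Real.norm_eq_abs, abs_of_nonneg]
    simp only [hg]; positivity
  · refine Eventually.of_forall fun ω => ?_
    obtain ⟨d, hd, hu⟩ := path_unif (hY.cont ω) T hη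
    refine tendsto_const_nhds.congr' ?_
    filter_upwards [eventually_gt_atTop 0, (mesh_tendsto T).eventually (ge_mem_nhds hd)]
      with N hN hm
    rw [indicator_of_notMem]
    simp only [hS, mem_iUnion, Finset.mem_range, not_exists]
    intro i hi hω
    have := hu _ (grid_mem hT.le (Nat.succ_le_of_lt hi) hN) _ (grid_mem hT.le hi.le hN) (by
      rw [show ((i.succ : ℕ) : ℝ) * (T / N) - i * (T / N) = T / N by push_cast; ring,
        abs_of_nonneg (by positivity)]
      exact hm)
    exact absurd hω.2 (not_lt.2 this.le)

/-- Summary of the exit estimates along fine grids. -/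
lemma exit_summary (hY : IsBESQ μ ℱ δ 1 Y) (hδ : 0 < δ) (hδ2 : δ < 2) {ε K T θ : ℝ} (hε : 0 < ε)
    (hε1 : ε < 1) (hK : 1 < K) (hT : 0 < T) (hθ : 0 < θ) (hθ1 : θ ≤ 1) {p : ℝ}
    (hp : p = 1 - δ / 2) :
    ∃ η : ℝ, 0 < η ∧ η ≤ 1 ∧ ∀ᶠ N : ℕ in atTop,
      μ.real (AliveB Y ε K η (T / N) N) ≤ (K + 2) / (δ * T) ∧
      ∑ i ∈ Finset.range N, μ.real (JumpB Y ε K η (T / N) i) ≤ θ ∧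
      1 ≤ ε ^ p + (K + 1) ^ p * ∑ i ∈ Finset.range N, μ.real (UpB Y ε K η (T / N) i)
        + K ^ p * μ.real (AliveB Y ε K η (T / N) N) + θ ∧
      K ^ p * ∑ i ∈ Finset.range N, μ.real (UpB Y ε K η (T / N) i) ≤ 1 + θ := by
  have hp0 : 0 < p := by linarith
  have hp1 : p < 1 := by linarith
  obtain ⟨C, hC0, hC⟩ := rpow_taylor_scaled hp0 hp1 hε
  set η : ℝ := min 1 (θ / (4 * (C * (4 * K * T)))) with hη
  have hη0 : 0 < η := by rw [hη]; positivity
  have hη1 : η ≤ 1 := min_le_left _ _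
  have hηb : C * η * (4 * K * T) ≤ θ / 4 := by
    have : η ≤ θ / (4 * (C * (4 * K * T))) := min_le_right _ _
    calc C * η * (4 * K * T) = (C * (4 * K * T)) * η := by ring
      _ ≤ (C * (4 * K * T)) * (θ / (4 * (C * (4 * K * T)))) := by gcongr
      _ = θ / 4 := by field_simp
  refine ⟨η, hη0, hη1, ?_⟩
  have hE := err_tendsto hY ε K hη0 hT
  have l1 : Tendsto (fun N : ℕ => ((2 * δ + δ ^ 2) * ε ^ (p - 2) * T
      + C * η * ((2 * δ + δ ^ 2) * T)) * (T / N) + (C + 1) * errB μ Y ε K η (T / N) N)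
      atTop (nhds 0) := by
    have := ((mesh_tendsto T).const_mul ((2 * δ + δ ^ 2) * ε ^ (p - 2) * T
      + C * η * ((2 * δ + δ ^ 2) * T))).add (hE.const_mul (C + 1))
    simpa using this
  filter_upwards [eventually_gt_atTop 0, hE.eventually (ge_mem_nhds hθ),
    l1.eventually (ge_mem_nhds (show (0:ℝ) < θ / 4 by positivity))] with N hN e1 e2
  have hN' : (N:ℝ) ≠ 0 := by positivity
  have hh : 0 ≤ T / (N:ℝ) := by positivity
  have hNT : (N:ℝ) * (T / N) = T := mul_div_cancel₀ _ hN'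
  have hJ := jump_sum hY ε K η hh N
  have hJ0 : 0 ≤ ∑ i ∈ Finset.range N, μ.real (JumpB Y ε K η (T / N) i) :=
    Finset.sum_nonneg fun i _ => measureReal_nonneg
  have hX := exit_time hY hδ (ε := ε) (η := η) hε1 hK hη1 hh N
  obtain ⟨s1, s2⟩ := exit_scale hY hδ hδ2 hε hε1 hK hη0 hη1 hh hp hC0 hC N rfl
  set E := errB μ Y ε K η (T / N) N
  have hRe : (N:ℝ) * ((2 * δ + δ ^ 2) * ε ^ (p - 2) * (T / N) ^ 2
        + C * η * (4 * K * (T / N) + (2 * δ + δ ^ 2) * (T / N) ^ 2)) + C * E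
      = C * η * (4 * K * T) + (((2 * δ + δ ^ 2) * ε ^ (p - 2) * T
      + C * η * ((2 * δ + δ ^ 2) * T)) * (T / N) + (C + 1) * E) - E := by
    have : ∀ a b c : ℝ, (N:ℝ) * (a * (T / N) ^ 2 + c * (4 * K * (T / N) + b * (T / N) ^ 2))
        = a * (N * (T / N)) * (T / N) + c * (4 * K * (N * (T / N)) + b * (N * (T / N)) * (T/N)) := by
      intro a b c; ring
    rw [this, hNT]; ring
  rw [hRe] at s1 s2
  refine ⟨?_, by linarith, by linarith, by linarith⟩
  rw [hNT] at hX
  rw [le_div_iff₀ (by positivity), mul_comm]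
  linarith

end Part6

section Part7
variable {Ω : Type*} {m : MeasurableSpace Ω} {μ : Measure Ω} [IsProbabilityMeasure μ]
  {ℱ : Filtration ℝ m} {δ : ℝ} {Y : ℝ → Ω → ℝ}

lemma union_real {D : ℕ → Set Ω} (hD : ∀ i, MeasurableSet (D i))
    (hd : Pairwise (Function.onFun Disjoint D)) (N : ℕ) :
    μ.real (⋃ i ∈ Finset.range N, D i) = ∑ i ∈ Finset.range N, μ.real (D i) :=
  measureReal_biUnion_finset (fun _ _ _ _ hij => hd hij) (fun i _ => hD i)

lemma low_event (hY : IsBESQ μ ℱ δ 1 Y) (hδ : 0 < δ) (hδ2 : δ < 2) {ε K T θ : ℝ} (hε : 0 < ε)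
    (hε1 : ε < 1) (hK : 1 < K) (hT : 0 < T) (hθ : 0 < θ) (hθ1 : θ ≤ 1) {p : ℝ}
    (hp : p = 1 - δ / 2) :
    ∃ E : Set Ω, MeasurableSet E ∧ 1 - (1 + θ) / K ^ p - (K + 2) / (δ * T) - θ ≤ μ.real E ∧
      ∀ ω ∈ E, ∃ t ∈ Icc (0:ℝ) T, Y t ω ≤ ε := by
  obtain ⟨η, hη0, hη1, hev⟩ := exit_summary hY hδ hδ2 hε hε1 hK hT hθ hθ1 hp
  obtain ⟨N, hN, b1, b2, b3, b4⟩ := ((eventually_gt_atTop 0).and hev).exists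
  have hm : ∀ i, MeasurableSet (LowB Y ε K η (T / N) i) := fun i =>
    ℱ.le _ _ (jump_meas hY ε K η (by positivity) i).2.1
  refine ⟨⋃ i ∈ Finset.range N, LowB Y ε K η (T / N) i,
    Finset.measurableSet_biUnion _ fun i _ => hm i, ?_, ?_⟩
  · rw [union_real hm (low_disj Y ε K η (T / N))]
    have ht := total_prob hY ε K η (show 0 ≤ T / (N:ℝ) by positivity) N
    have : ∑ i ∈ Finset.range N, μ.real (UpB Y ε K η (T / N) i) ≤ (1 + θ) / K ^ p := by
      rw [le_div_iff₀ (by positivity), mul_comm]; exact b4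
    linarith
  · intro ω hω
    simp only [mem_iUnion, Finset.mem_range] at hω
    obtain ⟨i, hi, hω⟩ := hω
    exact ⟨_, grid_mem hT.le (Nat.succ_le_of_lt hi) hN, hω.2.2⟩

lemma hit_event (hY : IsBESQ μ ℱ δ 1 Y) (hδ : 0 < δ) (hδ2 : δ < 2) {K T θ : ℝ}
    (hK : 1 < K) (hT : 0 < T) (hθ : 0 < θ) (hθ1 : θ ≤ 1) {p : ℝ}
    (hp : p = 1 - δ / 2) :
    ∃ G : Set Ω, MeasurableSet G ∧ 1 - (1 + θ) / K ^ p - (K + 2) / (δ * T) - θ ≤ μ.real G ∧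
      ∀ ω ∈ G, ∃ t : ℝ, 0 ≤ t ∧ Y t ω = 0 := by
  have hε : ∀ n : ℕ, (0:ℝ) < 1 / ((n:ℝ) + 2) := fun n => by positivity
  have hε1 : ∀ n : ℕ, 1 / ((n:ℝ) + 2) < 1 := fun n => by
    rw [div_lt_one (by positivity)]
    have : (0:ℝ) ≤ n := by positivity
    linarith
  choose E hEm hE hEz using fun n : ℕ =>
    low_event hY hδ hδ2 (hε n) (hε1 n) hK hT hθ hθ1 hp
  obtain ⟨g1, g2⟩ := le_measure_frequently hEm (μ := μ)
    (a := ENNReal.ofReal (1 - (1 + θ) / K ^ p - (K + 2) / (δ * T) - θ))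
    (Eventually.of_forall fun n => by
      rw [← ofReal_measureReal]
      exact ENNReal.ofReal_le_ofReal (hE n))
  refine ⟨_, g1, ?_, ?_⟩
  · exact (ENNReal.ofReal_le_iff_le_toReal (measure_ne_top _ _)).1 g2
  · intro ω hω
    obtain ⟨x, hx, hmin⟩ := isCompact_Icc.exists_isMinOn (nonempty_Icc.2 hT.le)
      ((hY.cont ω).continuousOn (s := Icc (0:ℝ) T))
    refine ⟨x, hx.1, le_antisymm ?_ (hY.nonneg x ω)⟩
    refine le_of_forall_pos_le_add fun r hr => ?_
    have hlim : Tendsto (fun n : ℕ => 1 / ((n:ℝ) + 2)) atTop (nhds 0) := by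
      have := (tendsto_one_div_add_atTop_nhds_zero_nat (𝕜 := ℝ)).comp (tendsto_add_atTop_nat 1)
      refine this.congr fun n => ?_
      simp only [Function.comp]
      push_cast
      ring_nf
    obtain ⟨n, hn, hr'⟩ := (hω.and_eventually (hlim.eventually (ge_mem_nhds hr))).exists
    obtain ⟨t, ht, hle⟩ := hEz n ω hn
    have := hmin ht
    simp only [mem_ofPred_eq] at this
    linarith

/-- The process hits zero almost surely. -/
lemma hit_ae (hY : IsBESQ μ ℱ δ 1 Y) (hδ : 0 < δ) (hδ2 : δ < 2) :
    ∀ᵐ ω ∂μ, ∃ t : ℝ, 0 ≤ t ∧ Y t ω = 0 := by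
  have hp0 : 0 < 1 - δ / 2 := by linarith
  rw [ae_iff]
  refine le_antisymm (ENNReal.le_of_forall_pos_le_add fun r hr _ => ?_) zero_le
  rw [zero_add]
  set ρ : ℝ := min r 1 with hρ
  have hρ0 : 0 < ρ := by rw [hρ]; have : (0:ℝ) < r := hr; positivity
  have hρ1 : ρ ≤ 1 := min_le_right _ _
  have hρr : ρ ≤ r := min_le_left _ _
  have hlim : Tendsto (fun K : ℝ => K ^ (1 - δ / 2)) atTop atTop := tendsto_rpow_atTop hp0
  obtain ⟨K, hK1, hK2⟩ := ((eventually_gt_atTop 1).and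
    (hlim.eventually (eventually_ge_atTop (8 / ρ)))).exists
  set T : ℝ := 4 * (K + 2) / (δ * ρ) with hT
  have hT0 : 0 < T := by rw [hT]; positivity
  obtain ⟨G, gm, gp, gz⟩ := hit_event hY hδ hδ2 hK1 hT0 (θ := ρ / 4) (by linarith) (by linarith)
    (p := 1 - δ / 2) rfl
  have e1 : (1 + ρ / 4) / K ^ (1 - δ / 2) ≤ ρ / 4 := by
    rw [div_le_iff₀ (by positivity)]
    have : ρ / 4 * (8 / ρ) ≤ ρ / 4 * K ^ (1 - δ / 2) := by gcongr
    have h2 : ρ / 4 * (8 / ρ) = 2 := by field_simp; norm_num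
    linarith
  have e2 : (K + 2) / (δ * T) = ρ / 4 := by
    rw [hT]; have : K + 2 ≠ 0 := by positivity
    field_simp
  have hG : 1 - ρ ≤ μ.real G := by linarith
  have hGc : μ.real Gᶜ ≤ ρ := by
    have := probReal_compl_eq_one_sub (μ := μ) gm
    linarith
  calc μ {ω | ¬ ∃ t : ℝ, 0 ≤ t ∧ Y t ω = 0} ≤ μ Gᶜ :=
        measure_mono fun ω hω hg => hω (gz ω hg)
    _ = ENNReal.ofReal (μ.real Gᶜ) := (ofReal_measureReal).symm
    _ ≤ ENNReal.ofReal r := ENNReal.ofReal_le_ofReal (hGc.trans hρr)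
    _ = r := ENNReal.ofReal_coe_nnreal

end Part7

section Part8
variable {Ω : Type*} {m : MeasurableSpace Ω} {μ : Measure Ω} [IsProbabilityMeasure μ]
  {ℱ : Filtration ℝ m} {δ : ℝ} {Y : ℝ → Ω → ℝ}

lemma center_int (hY : IsBESQ μ ℱ δ 1 Y) (s t c : ℝ) :
    Integrable (fun ω => (Y t ω - c - Y s ω) ^ 2) μ := by
  refine ((((hY.integrable_sq t).const_mul 3).add ((hY.integrable_sq s).const_mul 3)).add
    (integrable_const (3 * c ^ 2))).mono'
    ((((besq_meas hY t).sub_const c).sub (besq_meas hY s)).pow_const 2).aestronglyMeasurable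
    (Eventually.of_forall fun ω => ?_)
  rw [Real.norm_eq_abs, abs_of_nonneg (sq_nonneg _)]
  simp only [Pi.add_apply]
  nlinarith [sq_nonneg (Y t ω + Y s ω), sq_nonneg (Y t ω + c), sq_nonneg (Y s ω - c)]

lemma besq_center (hY : IsBESQ μ ℱ δ 1 Y) (hδ : 0 < δ) {s u t : ℝ} (hs : 0 ≤ s) (hsu : s ≤ u)
    (hut : u ≤ t) {D : Set Ω} (hD : MeasurableSet[ℱ u] D) {B : ℝ}
    (hB : ∀ ω ∈ D, Y s ω ≤ B) :
    ∫ ω in D, (Y t ω - δ * (t - s) - Y s ω) ^ 2 ∂μ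
      = ∫ ω in D, ((Y u ω - δ * (u - s) - Y s ω) ^ 2
        + 4 * (t - u) * Y u ω + 2 * δ * (t - u) ^ 2) ∂μ := by
  have ms : Measurable[ℱ u] (Y s) := (hY.adapted s).mono (ℱ.mono hsu) le_rfl
  have mb : Measurable[ℱ u] (fun ω => δ * (t - s) + Y s ω) := ms.const_add _
  have hbd : ∀ ω ∈ D, |δ * (t - s) + Y s ω| ≤ δ * (t - s) + B := by
    intro ω hω
    have h1 := hY.nonneg s ω
    have h2 : 0 ≤ δ * (t - s) := mul_nonneg hδ.le (by linarith)
    rw [abs_of_nonneg (by linarith)]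
    linarith [hB ω hω]
  set β := δ * (t - s) + B with hβ
  have h := (besq_quad hY (hs.trans hsu) hut hD (c0 := fun ω => (δ * (t - s) + Y s ω) ^ 2)
    (c1 := fun ω => -2 * (δ * (t - s) + Y s ω)) (c2 := fun _ => 1)
    (mb.pow_const 2) (mb.const_mul _) measurable_const (B := 1 + β ^ 2 + 2 * |β|)
    (fun ω hω => by
      have h1 := hbd ω hω
      rw [abs_of_nonneg (sq_nonneg _)]
      have h2 : (δ * (t - s) + Y s ω) ^ 2 ≤ β ^ 2 := sq_le_sq' (by linarith [(abs_le.1 h1).1])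
        ((abs_le.1 h1).2)
      have := abs_nonneg β
      linarith)
    (fun ω hω => by
      rw [abs_mul]
      have h1 := hbd ω hω
      have := le_abs_self β
      have : |(-2:ℝ)| = 2 := by norm_num
      rw [this]
      nlinarith [sq_nonneg β])
    (fun ω hω => by
      rw [abs_one]
      have := abs_nonneg β
      nlinarith [sq_nonneg β])).2
  calc _ = ∫ ω in D, ((δ * (t - s) + Y s ω) ^ 2 + -2 * (δ * (t - s) + Y s ω) * Y t ω
        + 1 * (Y t ω) ^ 2) ∂μ := by congr 1; ext ω; ring
    _ = _ := by rw [h]; congr 1; ext ω; ring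

/-- Maximal inequality: started in `[K, 2K]`, the process stays above `K/2` for time `K/128`
with conditional probability at least `1/2`. -/
lemma doob_stay (hY : IsBESQ μ ℱ δ 1 Y) (hδ : 0 < δ) (hδ2 : δ < 2) {s h K : ℝ} (hs : 0 ≤ s)
    (hh : 0 ≤ h) (hK : 0 < K) (J : ℕ) (hJ : J * h ≤ K / 128) {A : Set Ω}
    (hA : MeasurableSet[ℱ s] A) (hA1 : ∀ ω ∈ A, K ≤ Y s ω ∧ Y s ω ≤ 2 * K) :
    μ.real (A ∩ {ω | ∃ j ∈ Finset.range (J + 1), Y (s + j * h) ω < K / 2}) ≤ 1 / 2 * μ.real A := by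
  set D : ℕ → Set Ω := fun j => A ∩ {ω | Y (s + j * h) ω < K / 2 ∧
    ∀ k ∈ Finset.range j, K / 2 ≤ Y (s + k * h) ω} with hDdef
  have hle : ∀ {k j : ℕ}, k ≤ j → s + k * h ≤ s + j * h := by
    intro k j hkj
    have : (k:ℝ) ≤ j := by exact_mod_cast hkj
    gcongr
  have hsj : ∀ j : ℕ, s ≤ s + j * h := fun j => by
    have : 0 ≤ (j:ℝ) * h := by positivity
    linarith
  have hDm : ∀ j : ℕ, MeasurableSet[ℱ (s + j * h)] (D j) := by
    intro j
    refine (ℱ.mono (hsj j) _ hA).inter (MeasurableSet.inter ?_ ?_)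
    · exact gmeas_t (hY.adapted _) _
    · have : {ω | ∀ k ∈ Finset.range j, K / 2 ≤ Y (s + k * h) ω}
          = ⋂ k ∈ Finset.range j, {ω | K / 2 ≤ Y (s + k * h) ω} := by ext ω; simp
      change MeasurableSet[ℱ (s + j * h)] {ω | ∀ k ∈ Finset.range j, K / 2 ≤ Y (s + k * h) ω}
      rw [this]
      refine Finset.measurableSet_biInter _ fun k hk => ?_
      exact ℱ.mono (hle (Finset.mem_range.1 hk).le) _ (gmeas_e' (hY.adapted _) _)
  have hDm' : ∀ j, MeasurableSet (D j) := fun j => ℱ.le _ _ (hDm j)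
  have key : ∀ i j, i < j → Disjoint (D i) (D j) := by
    intro i j hij
    rw [disjoint_left]
    intro ω h1 h2
    exact absurd h1.2.1 (not_lt.2 (h2.2.2 i (Finset.mem_range.2 hij)))
  have hDd : Pairwise (Function.onFun Disjoint D) := by
    intro i j hij
    rcases lt_or_gt_of_ne hij with h | h
    · exact key i j h
    · exact (key j i h).symm
  set t : ℝ := s + J * h with ht
  set f : Ω → ℝ := fun ω => (Y t ω - δ * (t - s) - Y s ω) ^ 2 with hf
  have hfi : Integrable f μ := center_int hY s t _
  have hsub : A ∩ {ω | ∃ j ∈ Finset.range (J + 1), Y (s + j * h) ω < K / 2}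
      ⊆ ⋃ j ∈ Finset.range (J + 1), D j := by
    classical
    rintro ω ⟨hωA, hex⟩
    have hex' : ∃ j, j ∈ Finset.range (J + 1) ∧ Y (s + j * h) ω < K / 2 := hex
    have hspec := Nat.find_spec hex'
    simp only [mem_iUnion]
    refine ⟨Nat.find hex', hspec.1, hωA, hspec.2, fun k hk => ?_⟩
    have hk' := Finset.mem_range.1 hk
    by_contra hc
    refine Nat.find_min hex' hk' ⟨?_, not_le.1 hc⟩
    have := Finset.mem_range.1 hspec.1
    exact Finset.mem_range.2 (hk'.trans this)
  have hDj : ∀ j ∈ Finset.range (J + 1), K ^ 2 / 4 * μ.real (D j) ≤ ∫ ω in D j, f ω ∂μ := by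
    intro j hj
    have hjJ : j ≤ J := Nat.lt_succ_iff.1 (Finset.mem_range.1 hj)
    rw [hf, besq_center hY hδ hs (hsj j) (hle hjJ) (hDm j) (fun ω hω => (hA1 ω hω.1).2)]
    refine const_le_setInt (hDm' j) (((center_int hY s _ _).add
      ((besq_int hY _).const_mul _)).add (integrable_const _)) fun ω hω => ?_
    have h1 := (hA1 ω hω.1).1
    have h2 : Y (s + j * h) ω < K / 2 := hω.2.1
    have h3 := hY.nonneg (s + j * h) ω
    have h4 : 0 ≤ t - (s + j * h) := by linarith [hle hjJ]
    have h5 : 0 ≤ 4 * (t - (s + j * h)) * Y (s + j * h) ω := by positivity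
    have h6 : 0 ≤ 2 * δ * (t - (s + j * h)) ^ 2 := by positivity
    have h7 : 0 ≤ δ * (s + j * h - s) := mul_nonneg hδ.le (by linarith [hsj j])
    have h8 : K / 2 ≤ δ * (s + j * h - s) + Y s ω - Y (s + j * h) ω := by linarith
    have h9 : K ^ 2 / 4 ≤ (Y (s + j * h) ω - δ * (s + j * h - s) - Y s ω) ^ 2 := by nlinarith
    change K ^ 2 / 4 ≤ (Y (s + j * h) ω - δ * (s + j * h - s) - Y s ω) ^ 2
      + 4 * (t - (s + j * h)) * Y (s + j * h) ω + 2 * δ * (t - (s + j * h)) ^ 2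
    linarith
  have hτ : t - s = J * h := by rw [ht]; ring
  have hτ0 : 0 ≤ t - s := by rw [hτ]; positivity
  have hAm := ℱ.le _ _ hA
  have hAf : ∫ ω in A, f ω ∂μ ≤ K ^ 2 / 8 * μ.real A := by
    rw [hf, besq_center hY hδ hs le_rfl (hsj J) hA (fun ω hω => (hA1 ω hω).2)]
    refine setInt_le_const hAm (((center_int hY s _ _).add
      ((besq_int hY _).const_mul _)).add (integrable_const _)) fun ω hω => ?_
    have h1 := (hA1 ω hω).2
    have h2 := hY.nonneg s ω
    have h3 : t - s ≤ K / 128 := by rw [hτ]; exact hJ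
    have e : (Y s ω - δ * (s - s) - Y s ω) ^ 2 = 0 := by ring
    change (Y s ω - δ * (s - s) - Y s ω) ^ 2 + 4 * (t - s) * Y s ω + 2 * δ * (t - s) ^ 2 ≤ _
    rw [e]
    have a1 : 4 * (t - s) * Y s ω ≤ 4 * (K / 128) * (2 * K) := by gcongr
    have a2 : 2 * δ * (t - s) ^ 2 ≤ 2 * 2 * (K / 128) ^ 2 := by gcongr
    nlinarith
  have hsum : ∑ j ∈ Finset.range (J + 1), ∫ ω in D j, f ω ∂μ ≤ ∫ ω in A, f ω ∂μ := by
    rw [← integral_biUnion_finset _ (fun i _ => hDm' i) (fun i _ j _ hij => hDd hij)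
      (fun i _ => hfi.integrableOn)]
    refine setIntegral_mono_set hfi.integrableOn (Eventually.of_forall fun ω => sq_nonneg _) ?_
    refine LE.le.eventuallyLE ?_
    exact iUnion₂_subset fun j _ => inter_subset_left
  have h1 := measureReal_mono (μ := μ) hsub (measure_ne_top _ _)
  rw [union_real hDm' hDd] at h1
  have h2 := Finset.sum_le_sum hDj
  rw [← Finset.mul_sum] at h2
  have h3 : K ^ 2 / 4 * ∑ i ∈ Finset.range (J + 1), μ.real (D i) ≤ K ^ 2 / 8 * μ.real A := by
    linarith
  have hK2 : 0 < K ^ 2 := by positivity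
  refine h1.trans ?_
  by_contra hc
  push Not at hc
  nlinarith

end Part8

section Part9

lemma path_int {f : ℝ → ℝ} (hf : Continuous f) (hn : ∀ t, 0 ≤ f t) {a b L α : ℝ} (hα : 0 ≤ α)
    (ha : 0 ≤ a) (hab : a ≤ b) (hpos : ∀ t ∈ Icc 0 b, 0 < f t) (hL : 0 ≤ L)
    (hlow : ∀ t ∈ Icc a b, L ≤ f t) (hz : ∃ t : ℝ, 0 ≤ t ∧ f t = 0) :
    L ^ α * (b - a) ≤ ∫ s in (0:ℝ)..(sInf {t : ℝ | 0 ≤ t ∧ f t = 0}), (f s) ^ α := by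
  set τ := sInf {t : ℝ | 0 ≤ t ∧ f t = 0} with hτ
  have hbτ : b ≤ τ := by
    refine le_csInf hz ?_
    rintro t ⟨h0, h1⟩
    by_contra hc
    exact absurd h1 (hpos t ⟨h0, (not_le.1 hc).le⟩).ne'
  have hc : Continuous fun s => (f s) ^ α := hf.rpow_const fun _ => Or.inr hα
  have h1 : ∫ s in a..b, (f s) ^ α ≤ ∫ s in (0:ℝ)..τ, (f s) ^ α :=
    intervalIntegral.integral_mono_interval ha hab hbτ
      (Eventually.of_forall fun s => Real.rpow_nonneg (hn s) α) (hc.intervalIntegrable _ _)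
  have h2 : ∫ s in a..b, L ^ α ≤ ∫ s in a..b, (f s) ^ α :=
    intervalIntegral.integral_mono_on hab intervalIntegrable_const (hc.intervalIntegrable _ _)
      fun s hs => Real.rpow_le_rpow hL (hlow s hs) hα
  rw [intervalIntegral.integral_const, smul_eq_mul, mul_comm] at h2
  exact h2.trans h1

lemma path_grid {f : ℝ → ℝ} {S h r ε K : ℝ} (hh : 0 < h)
    (hu : ∀ s ∈ Icc (0:ℝ) S, ∀ t ∈ Icc (0:ℝ) S, |s - t| ≤ h → |f s - f t| < r) (n J : ℕ)
    (hS : n * h + J * h ≤ S) (hK : 0 < K) (hr1 : r ≤ ε) (hr2 : r ≤ K / 4)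
    (h1 : ∀ k < n, ε < f (k * h)) (h2 : ∀ j ≤ J, K / 2 ≤ f (n * h + j * h)) :
    (∀ t ∈ Icc 0 (n * h + J * h), 0 < f t) ∧ ∀ t ∈ Icc (n * h) (n * h + J * h), K / 4 ≤ f t := by
  have hfl : ∀ t : ℝ, 0 ≤ t → (⌊t / h⌋₊ : ℝ) * h ≤ t ∧ t - (⌊t / h⌋₊ : ℝ) * h ≤ h := by
    intro t ht
    have a1 := Nat.floor_le (show 0 ≤ t / h by positivity)
    have a2 := Nat.lt_floor_add_one (t / h)
    rw [le_div_iff₀ hh] at a1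
    rw [div_lt_iff₀ hh] at a2
    exact ⟨a1, by linarith⟩
  have hclose : ∀ t ∈ Icc 0 (n * h + J * h), |f (⌊t / h⌋₊ * h) - f t| < r := by
    intro t ht
    obtain ⟨a1, a2⟩ := hfl t ht.1
    refine hu _ ⟨by positivity, by linarith [ht.2]⟩ _ ⟨ht.1, by linarith [ht.2]⟩ ?_
    rw [abs_sub_comm, abs_of_nonneg (by linarith)]
    exact a2
  have hbig : ∀ t ∈ Icc 0 (n * h + J * h), n ≤ ⌊t / h⌋₊ → K / 4 ≤ f t := by
    intro t ht hk
    have hkJ : ⌊t / h⌋₊ ≤ n + J := by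
      refine Nat.floor_le_of_le ?_
      rw [div_le_iff₀ hh]; push_cast; linarith [ht.2]
    obtain ⟨j, hj⟩ := Nat.exists_eq_add_of_le hk
    have h3 := h2 j (by omega)
    have h4 := (abs_lt.1 (hclose t ht)).2
    rw [hj] at h4
    push_cast at h4
    rw [add_mul] at h4
    linarith
  refine ⟨fun t ht => ?_, fun t ht => ?_⟩
  · by_cases hk : n ≤ ⌊t / h⌋₊
    · linarith [hbig t ht hk]
    · have h3 := h1 _ (not_le.1 hk)
      have h4 := (abs_lt.1 (hclose t ht)).2
      linarith
  · refine hbig t ⟨le_trans (by positivity) ht.1, ht.2⟩ ?_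
    refine Nat.le_floor ?_
    rw [le_div_iff₀ hh]
    exact ht.1

variable {Ω : Type*} {m : MeasurableSpace Ω} {μ : Measure Ω} [IsProbabilityMeasure μ]
  {ℱ : Filtration ℝ m} {δ : ℝ} {Y : ℝ → Ω → ℝ}

/-- With probability at least `c K^{-p}` the path climbs to `K` before reaching zero, and then
stays above `K/4` for time at least `K/256`. -/
lemma up_event (hY : IsBESQ μ ℱ δ 1 Y) (hδ : 0 < δ) (hδ2 : δ < 2) {K : ℝ} (hK : 1 < K) {p : ℝ}
    (hp : p = 1 - δ / 2) :
    ∃ G : Set Ω, (1 / 8) / (K + 1) ^ p ≤ μ.real G ∧ ∀ ω ∈ G, ∃ a b : ℝ, 0 ≤ a ∧ a + K / 256 ≤ b ∧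
      (∀ t ∈ Icc 0 b, 0 < Y t ω) ∧ ∀ t ∈ Icc a b, K / 4 ≤ Y t ω := by
  have hp0 : 0 < p := by linarith
  have hp1 : p < 1 := by linarith
  set ε : ℝ := (1 / 4 : ℝ) ^ (1 / p) with hε
  have hε0 : 0 < ε := by positivity
  have hε1 : ε < 1 := Real.rpow_lt_one (by norm_num) (by norm_num) (by positivity)
  have hεp : ε ^ p = 1 / 4 := by
    rw [hε, ← Real.rpow_mul (by norm_num), one_div_mul_cancel hp0.ne', Real.rpow_one]
  set T : ℝ := 4 * K ^ p * (K + 2) / δ with hT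
  have hT0 : 0 < T := by rw [hT]; positivity
  have hTe : K ^ p * ((K + 2) / (δ * T)) = 1 / 4 := by
    have : K ^ p ≠ 0 := by positivity
    have : K + 2 ≠ 0 := by positivity
    rw [hT]; field_simp
  obtain ⟨η, hη0, hη1, hev⟩ := exit_summary hY hδ hδ2 hε0 hε1 hK hT0 (θ := 1 / 4)
    (by norm_num) (by norm_num) hp
  set J : ℕ → ℕ := fun N => ⌊K / 128 / (T / N)⌋₊ with hJ
  set bad : ℕ → ℕ → Set Ω := fun N i =>
    {ω | ∃ j ∈ Finset.range (J N + 1), Y ((i + 1 : ℕ) * (T / N) + j * (T / N)) ω < K / 2} with hbad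
  set D : ℕ → ℕ → Set Ω := fun N i => UpB Y ε K η (T / N) i \ bad N i with hD
  have hh : ∀ N : ℕ, 0 ≤ T / (N:ℝ) := fun N => by positivity
  have hUm : ∀ N i : ℕ, MeasurableSet[ℱ ((i + 1 : ℕ) * (T / N))] (UpB Y ε K η (T / N) i) :=
    fun N i => (jump_meas hY ε K η (hh N) i).2.2
  have hbm : ∀ N i, MeasurableSet (bad N i) := by
    intro N i
    have : bad N i = ⋃ j ∈ Finset.range (J N + 1),
        {ω | Y ((i + 1 : ℕ) * (T / N) + j * (T / N)) ω < K / 2} := by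
      ext ω; simp [hbad]
    rw [this]
    exact Finset.measurableSet_biUnion _ fun j _ => gmeas_t (besq_meas hY _) _
  have hDm : ∀ N i, MeasurableSet (D N i) := fun N i => (ℱ.le _ _ (hUm N i)).diff (hbm N i)
  have hDd : ∀ N, Pairwise (Function.onFun Disjoint (D N)) := fun N i j hij =>
    (up_disj Y ε K η (T / N) hij).mono sdiff_subset sdiff_subset
  set E : ℕ → Set Ω := fun N => ⋃ i ∈ Finset.range N, D N i with hE
  have hEm : ∀ N, MeasurableSet (E N) := fun N => Finset.measurableSet_biUnion _ fun i _ => hDm N i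
  have hJle : ∀ N : ℕ, 0 < N → (J N : ℝ) * (T / N) ≤ K / 128 := by
    intro N hN
    have hpos : 0 < T / (N:ℝ) := by positivity
    have := Nat.floor_le (show 0 ≤ K / 128 / (T / N) by positivity)
    rwa [le_div_iff₀ hpos] at this
  have hEp : ∀ᶠ N : ℕ in atTop, ENNReal.ofReal ((1 / 8) / (K + 1) ^ p) ≤ μ (E N) := by
    filter_upwards [eventually_gt_atTop 0, hev] with N hN hsm
    obtain ⟨b1, b2, b3, b4⟩ := hsm
    rw [← ofReal_measureReal (measure_ne_top _ _)]
    refine ENNReal.ofReal_le_ofReal ?_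
    rw [hE]
    simp only
    rw [union_real (hDm N) (hDd N)]
    have hi : ∀ i ∈ Finset.range N, 1 / 2 * μ.real (UpB Y ε K η (T / N) i) ≤ μ.real (D N i) := by
      intro i _
      have hd := doob_stay hY hδ hδ2 (s := (i + 1 : ℕ) * (T / N)) (by positivity) (hh N)
        (by linarith : 0 < K) (J N) (hJle N hN) (hUm N i) (fun ω hω => by
          refine ⟨hω.2.2.2, ?_⟩
          have := (alive_mem hY hε1 hK i ω hω.1).2
          have := (abs_le.1 hω.2.1).2
          linarith)
      have he := measureReal_inter_add_sdiff (μ := μ) (s := UpB Y ε K η (T / N) i) (hbm N i)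
      change μ.real (UpB Y ε K η (T / N) i ∩ bad N i) ≤ _ at hd
      simp only [hD]
      linarith
    have hs := Finset.sum_le_sum hi
    rw [← Finset.mul_sum] at hs
    have hA := mul_le_mul_of_nonneg_left b1 (show 0 ≤ K ^ p by positivity)
    rw [hTe] at hA
    rw [hεp] at b3
    have : (1 / 4) / (K + 1) ^ p ≤ ∑ i ∈ Finset.range N, μ.real (UpB Y ε K η (T / N) i) := by
      rw [div_le_iff₀ (by positivity)]
      linarith
    have e : (1 / 8 : ℝ) / (K + 1) ^ p = 1 / 2 * ((1 / 4) / (K + 1) ^ p) := by ring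
    linarith
  obtain ⟨g1, g2⟩ := le_measure_frequently hEm hEp
  refine ⟨_, (ENNReal.ofReal_le_iff_le_toReal (measure_ne_top _ _)).1 g2, ?_⟩
  intro ω hω
  have hr : 0 < min ε (K / 4) := by positivity
  obtain ⟨d, hd, hu⟩ := path_unif (hY.cont ω) (T + K / 128) hr
  obtain ⟨N, hN, hN0, hNd, hNK⟩ := (hω.and_eventually ((eventually_gt_atTop 0).and
    (((mesh_tendsto T).eventually (ge_mem_nhds hd)).and
      ((mesh_tendsto T).eventually (ge_mem_nhds (show (0:ℝ) < K / 256 by positivity)))))).exists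
  simp only [hE, mem_iUnion, Finset.mem_range] at hN
  obtain ⟨i, hi, hωi⟩ := hN
  obtain ⟨hU, hB⟩ := hωi
  have hpos : 0 < T / (N:ℝ) := by positivity
  have hJu : K / 128 - T / N ≤ (J N : ℝ) * (T / N) := by
    have := Nat.lt_floor_add_one (K / 128 / (T / N))
    rw [div_lt_iff₀ hpos] at this
    simp only [hJ]
    linarith
  have hmem := grid_mem hT0.le (Nat.succ_le_of_lt hi) hN0
  have hg := path_grid hpos (fun s hs t ht hst => hu s hs t ht (hst.trans hNd)) (i + 1) (J N)
    (by
      have := hmem.2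
      have := hJle N hN0
      push_cast at *
      linarith) (by linarith) (min_le_left _ _) (min_le_right _ _)
    (fun k hk => (alive_mem hY hε1 hK k ω (alive_anti Y ε K η (T / N)
      (Nat.lt_succ_iff.1 hk) hU.1)).1)
    (fun j hj => by
      by_contra hc
      exact hB ⟨j, Finset.mem_range.2 (Nat.lt_succ_iff.2 hj), not_le.1 hc⟩)
  exact ⟨_, _, hmem.1, by linarith, hg.1, hg.2⟩

end Part9

/-- `∫_0^{τ_0} Y_s^α ds ≥ z`, with `τ_0 = inf{t ≥ 0 : Y_t = 0}` (the guard
`∃ t ≥ 0, Y t ω = 0` records that the hitting time is finite, which holds a.s.). -/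
theorem stmt_8 {Ω : Type*} {m : MeasurableSpace Ω} (μ : Measure Ω) [IsProbabilityMeasure μ]
    (ℱ : Filtration ℝ m) (δ : ℝ) (hδ0 : 0 < δ) (hδ2 : δ < 2)
    (Y : ℝ → Ω → ℝ) (hY : IsBESQ μ ℱ δ 1 Y)
    (α : ℝ) (hα : 0 ≤ α) :
    ∃ c : ℝ, 0 < c ∧ ∀ z : ℝ, 1 < z →
      ENNReal.ofReal (c * z ^ (-((2 - δ) / (2 + 2 * α)))) ≤
        μ {ω | (∃ t : ℝ, 0 ≤ t ∧ Y t ω = 0) ∧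
          z ≤ ∫ s in (0:ℝ)..(sInf {t : ℝ | 0 ≤ t ∧ Y t ω = 0}), (Y s ω) ^ α} := by

  set p : ℝ := 1 - δ / 2 with hp
  have hp0 : 0 < p := by linarith
  refine ⟨(1 / 8) / (512 : ℝ) ^ p, by positivity, fun z hz => ?_⟩
  have hz0 : 0 < z := by linarith
  set w : ℝ := z ^ (1 / (1 + α)) with hw
  have hw1 : 1 < w := Real.one_lt_rpow hz (by positivity)
  have hw0 : 0 < w := by linarith
  obtain ⟨G, g1, g2⟩ := up_event hY hδ0 hδ2 (K := 256 * w) (by linarith) hp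
  have hwz : w ^ α * w = z := by
    rw [hw, ← Real.rpow_mul hz0.le, ← Real.rpow_add hz0]
    rw [show 1 / (1 + α) * α + 1 / (1 + α) = 1 by field_simp; ring, Real.rpow_one]
  have hexp : z ^ (-((2 - δ) / (2 + 2 * α))) = (w ^ p)⁻¹ := by
    rw [Real.rpow_neg hz0.le, hw, ← Real.rpow_mul hz0.le]
    congr 2
    rw [hp]; field_simp
  have hbound : (1 / 8) / (512 : ℝ) ^ p * z ^ (-((2 - δ) / (2 + 2 * α)))
      ≤ (1 / 8) / (256 * w + 1) ^ p := by
    rw [hexp, div_mul_eq_mul_div, ← div_eq_mul_inv, div_div, ← Real.mul_rpow (by positivity)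
      (by norm_num)]
    gcongr
    linarith
  calc ENNReal.ofReal ((1 / 8) / (512 : ℝ) ^ p * z ^ (-((2 - δ) / (2 + 2 * α))))
      ≤ ENNReal.ofReal (μ.real G) := ENNReal.ofReal_le_ofReal (hbound.trans g1)
    _ = μ G := ofReal_measureReal
    _ ≤ _ := by
      refine measure_mono_ae ?_
      filter_upwards [hit_ae hY hδ0 hδ2] with ω hω hG
      obtain ⟨a, b, ha, hab, hpos, hlow⟩ := g2 ω hG
      refine ⟨hω, ?_⟩
      refine le_trans ?_ (path_int (hY.cont ω) (fun t => hY.nonneg t ω) hα ha (by linarith) hpos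
        (L := 256 * w / 4) (by positivity) hlow hω)
      calc z = w ^ α * w := hwz.symm
        _ ≤ (256 * w / 4) ^ α * (b - a) := by
          gcongr
          · linarith
          · linarith
end

section
/- Let Y be a squared-Bessel process of dimension δ > 0 started at y ≥ 0, let α ≥ 0 and γ > −α, and set A_t = ∫_1^t s^γ Y_s^α ds. Then for every ε > 0, almost surely A_t > t^{1+γ+α−ε} for all sufficiently large t. -/
open MeasureTheory Filter Set

section helpers
set_option linter.unusedSectionVars false
variable {Ω : Type*} {m : MeasurableSpace Ω} {μ : Measure Ω} [IsProbabilityMeasure μ]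
    {ℱ : Filtration ℝ m} {δ y : ℝ} {Y : ℝ → Ω → ℝ}

lemma lin_aux {f g h k : Ω → ℝ} (hf : Integrable f μ) (hg : Integrable g μ)
    (hh : Integrable h μ) (hk : Integrable k μ) (a b c : ℝ) :
    ∫ ω, (f ω + a * g ω + b * h ω - c * k ω) ∂μ
      = ∫ ω, f ω ∂μ + a * ∫ ω, g ω ∂μ + b * ∫ ω, h ω ∂μ - c * ∫ ω, k ω ∂μ := by
  have h1 : Integrable (fun ω => f ω + a * g ω) μ := hf.add (hg.const_mul a)
  have h2 : Integrable (fun ω => f ω + a * g ω + b * h ω) μ := h1.add (hh.const_mul b)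
  rw [integral_sub h2 (hk.const_mul c), integral_add h1 (hh.const_mul b),
    integral_add hf (hg.const_mul a), integral_const_mul, integral_const_mul, integral_const_mul]

lemma pull_aux (s : ℝ) (Z X X' : Ω → ℝ) (hZ : StronglyMeasurable[ℱ s] Z) (c : ℝ)
    (hc : ∀ ω, |Z ω| ≤ c) (hX : Integrable X μ) (h : μ[X | ℱ s] =ᵐ[μ] X') :
    ∫ ω, Z ω * X ω ∂μ = ∫ ω, Z ω * X' ω ∂μ := by
  have h1 := condExp_stronglyMeasurable_mul_of_bound (ℱ.le s) hZ hX c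
    (ae_of_all μ (fun ω => by simpa using hc ω))
  have h2 : ∫ ω, (μ[Z * X | ℱ s]) ω ∂μ = ∫ ω, (Z * X) ω ∂μ := integral_condExp (ℱ.le s)
  change ∫ ω, (Z * X) ω ∂μ = _
  rw [← h2]
  apply integral_congr_ae
  filter_upwards [h1, h] with ω a b
  rw [a, Pi.mul_apply, b]

lemma meas_aux (hY : IsBESQ μ ℱ δ y Y) (t : ℝ) : Measurable (Y t) :=
  (hY.adapted t).mono (ℱ.le t) le_rfl

lemma memLp_aux (hY : IsBESQ μ ℱ δ y Y) (t : ℝ) : MemLp (Y t) 2 μ :=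
  (memLp_two_iff_integrable_sq (meas_aux hY t).aestronglyMeasurable).2 (hY.integrable_sq t)

lemma int_aux (hY : IsBESQ μ ℱ δ y Y) (t : ℝ) : Integrable (Y t) μ :=
  (memLp_aux hY t).integrable (by norm_num)

lemma first_aux (hY : IsBESQ μ ℱ δ y Y) {s t : ℝ} (hs : 0 ≤ s) (hst : s ≤ t)
    (Z : Ω → ℝ) (hZ : StronglyMeasurable[ℱ s] Z) (c : ℝ) (hc : ∀ ω, |Z ω| ≤ c) :
    ∫ ω, Z ω * Y t ω ∂μ = ∫ ω, Z ω * (Y s ω + δ * (t - s)) ∂μ := by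
  have hZ' : AEStronglyMeasurable Z μ := (hZ.mono (ℱ.le s)).aestronglyMeasurable
  have hZi : Integrable Z μ := Integrable.of_bound hZ' c (ae_of_all μ (by simpa using hc))
  have h := pull_aux s Z (fun ω => Y t ω - y - δ * t) _ hZ c hc
    (((int_aux hY t).sub (integrable_const y)).sub (integrable_const (δ * t)))
    (hY.mart s t hs hst)
  have hb : ∀ᵐ x ∂μ, ‖Z x‖ ≤ c := ae_of_all μ (by simpa using hc)
  have i1 : Integrable (fun ω => Z ω * (Y t ω - y - δ * t)) μ :=
    Integrable.bdd_mul (((int_aux hY t).sub (integrable_const y)).sub (integrable_const (δ * t)))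
      hZ' hb
  have i2 : Integrable (fun ω => Z ω * (Y s ω - y - δ * s)) μ :=
    Integrable.bdd_mul (((int_aux hY s).sub (integrable_const y)).sub (integrable_const (δ * s)))
      hZ' hb
  have e1 : ∫ ω, Z ω * Y t ω ∂μ
      = ∫ ω, Z ω * (Y t ω - y - δ * t) ∂μ + ∫ ω, Z ω * (y + δ * t) ∂μ := by
    rw [← integral_add i1 (hZi.mul_const _)]; congr 1; ext ω; ring
  rw [e1, h, ← integral_add i2 (hZi.mul_const _)]; congr 1; ext ω; ring

lemma joint_aux (hY : IsBESQ μ ℱ δ y Y) : Measurable (Function.uncurry Y) :=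
  measurable_uncurry_of_continuous_of_measurable hY.cont (meas_aux hY)

lemma mean_aux (hY : IsBESQ μ ℱ δ y Y) {t : ℝ} (ht : 0 ≤ t) :
    ∫ ω, Y t ω ∂μ = y + δ * t := by
  have := first_aux hY le_rfl ht (fun _ => 1) stronglyMeasurable_const 1 (by simp)
  simpa [hY.init] using this

lemma intprod_aux (hY : IsBESQ μ ℱ δ y Y) {a b : ℝ} (ha : 0 ≤ a) :
    Integrable (Function.uncurry Y) ((volume.restrict (Ioc a b)).prod μ) := by
  rw [integrable_prod_iff (joint_aux hY).aestronglyMeasurable]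
  refine ⟨ae_of_all _ (fun u => int_aux hY u), ?_⟩
  have : IntegrableOn (fun u : ℝ => y + δ * u) (Ioc a b) :=
    (Continuous.integrableOn_Icc (by fun_prop)).mono_set Ioc_subset_Icc_self
  refine Integrable.congr this ?_
  filter_upwards [ae_restrict_mem measurableSet_Ioc] with u hu
  rw [← mean_aux hY (ha.trans hu.1.le)]
  simp [Function.uncurry, abs_of_nonneg (hY.nonneg _ _)]

lemma intint_aux (hY : IsBESQ μ ℱ δ y Y) {a b : ℝ} (ha : 0 ≤ a) (hab : a ≤ b) :
    Integrable (fun ω => ∫ u in a..b, Y u ω) μ := by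
  simp only [intervalIntegral.integral_of_le hab]
  exact (intprod_aux hY ha).integral_prod_right

/-- second moment bound -/
lemma second_aux (hY : IsBESQ μ ℱ δ y Y) (hδ : 0 < δ) {s t : ℝ} (hs : 0 ≤ s) (hst : s ≤ t)
    (Z : Ω → ℝ) (hZ : StronglyMeasurable[ℱ s] Z) (c : ℝ) (hc : ∀ ω, |Z ω| ≤ c)
    (h0 : ∀ ω, 0 ≤ Z ω) :
    ∫ ω, Z ω * Y t ω ^ 2 ∂μ ≤ (1 + 4 / δ) * ∫ ω, Z ω * (Y s ω + δ * (t - s)) ^ 2 ∂μ := by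
  have hZ' : AEStronglyMeasurable Z μ := (hZ.mono (ℱ.le s)).aestronglyMeasurable
  have hb : ∀ᵐ x ∂μ, ‖Z x‖ ≤ c := ae_of_all μ (by simpa using hc)
  have hZi : Integrable Z μ := Integrable.of_bound hZ' c hb
  have sq : ∀ (r k : ℝ), Integrable (fun ω => (Y r ω + k) ^ 2) μ := fun r k =>
    ((memLp_aux hY r).add (memLp_const k)).integrable_sq
  have ht := hs.trans hst
  have sq' : ∀ r, Integrable (fun ω => (Y r ω - y - δ * r) ^ 2) μ := fun r => by
    have := sq r (- y - δ * r)
    refine this.congr (ae_of_all _ fun ω => ?_)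
    simp only; ring
  have h := pull_aux s Z (fun ω => (Y t ω - y - δ * t) ^ 2 - 4 * ∫ u in (0:ℝ)..t, Y u ω) _ hZ c hc
    ((sq' t).sub ((intint_aux hY le_rfl ht).const_mul 4)) (hY.qv s t hs hst)
  have hf := first_aux hY hs hst Z hZ c hc
  set K := y + δ * t with hK
  -- integrabilities
  have j1 : Integrable (fun ω => Z ω * ((Y t ω - y - δ * t) ^ 2 - 4 * ∫ u in (0:ℝ)..t, Y u ω)) μ :=
    Integrable.bdd_mul ((sq' t).sub ((intint_aux hY le_rfl ht).const_mul 4)) hZ' hb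
  have j2 : Integrable (fun ω => Z ω * ((Y s ω - y - δ * s) ^ 2 - 4 * ∫ u in (0:ℝ)..s, Y u ω)) μ :=
    Integrable.bdd_mul ((sq' s).sub ((intint_aux hY le_rfl hs).const_mul 4)) hZ' hb
  have j3 : Integrable (fun ω => Z ω * Y t ω) μ := Integrable.bdd_mul (int_aux hY t) hZ' hb
  have j4 : Integrable (fun ω => Z ω * (Y s ω + δ * (t - s))) μ :=
    Integrable.bdd_mul ((int_aux hY s).add (integrable_const _)) hZ' hb
  have j5 : Integrable (fun ω => Z ω * ∫ u in (0:ℝ)..t, Y u ω) μ :=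
    Integrable.bdd_mul (intint_aux hY le_rfl ht) hZ' hb
  have j6 : Integrable (fun ω => Z ω * ∫ u in (s:ℝ)..t, Y u ω) μ :=
    Integrable.bdd_mul (intint_aux hY hs hst) hZ' hb
  have j7 : Integrable (fun ω => Z ω * (Y s ω + δ * (t - s)) ^ 2) μ :=
    Integrable.bdd_mul (sq s _) hZ' hb
  have hadd : ∀ ω, ∫ u in (0:ℝ)..t, Y u ω = (∫ u in (0:ℝ)..s, Y u ω) + ∫ u in s..t, Y u ω :=
    fun ω => (intervalIntegral.integral_add_adjacent_intervals
      ((hY.cont ω).intervalIntegrable _ _) ((hY.cont ω).intervalIntegrable _ _)).symm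
  -- expand
  have e1 : ∫ ω, Z ω * Y t ω ^ 2 ∂μ
      = ∫ ω, Z ω * (Y s ω + δ * (t - s)) ^ 2 ∂μ + 4 * ∫ ω, Z ω * (∫ u in s..t, Y u ω) ∂μ := by
    have a1 : ∫ ω, Z ω * Y t ω ^ 2 ∂μ =
        ∫ ω, Z ω * ((Y t ω - y - δ * t) ^ 2 - 4 * ∫ u in (0:ℝ)..t, Y u ω) ∂μ
        + 4 * ∫ ω, Z ω * (∫ u in (0:ℝ)..t, Y u ω) ∂μ
        + (2 * K) * ∫ ω, Z ω * Y t ω ∂μ - K ^ 2 * ∫ ω, Z ω ∂μ := by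
      rw [← lin_aux j1 j5 j3 hZi 4 (2 * K) (K ^ 2)]
      congr 1; ext ω; rw [hK]; ring
    rw [a1, h, hf, ← lin_aux j2 j5 j4 hZi 4 (2 * K) (K ^ 2), ← integral_const_mul,
      ← integral_add j7 (j6.const_mul 4)]
    congr 1; ext ω; rw [hadd ω, hK]; ring
  -- Fubini
  have e2 : ∫ ω, Z ω * (∫ u in s..t, Y u ω) ∂μ
      ≤ (t - s) * ∫ ω, Z ω * (Y s ω + δ * (t - s)) ∂μ := by
    have hp : Integrable (Function.uncurry fun u ω => Z ω * Y u ω)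
        ((volume.restrict (Ioc s t)).prod μ) :=
      Integrable.bdd_mul (f := fun p : ℝ × Ω => Z p.2) (c := c) (intprod_aux hY hs)
        (((hZ.mono (ℱ.le s)).comp_measurable measurable_snd).aestronglyMeasurable)
        (ae_of_all _ (fun p => by simpa using hc p.2))
    have hsw := integral_integral_swap hp
    have : ∫ ω, Z ω * (∫ u in s..t, Y u ω) ∂μ = ∫ u in Ioc s t, ∫ ω, Z ω * Y u ω ∂μ := by
      rw [hsw]
      simp only [intervalIntegral.integral_of_le hst, integral_const_mul]
    rw [this]
    have hle : ∫ u in Ioc s t, ∫ ω, Z ω * Y u ω ∂μ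
        ≤ ∫ u in Ioc s t, ∫ ω, Z ω * (Y s ω + δ * (t - s)) ∂μ := by
      apply setIntegral_mono_on hp.integral_prod_left (by simp) measurableSet_Ioc
      intro u hu
      have := first_aux hY hs hu.1.le Z hZ c hc
      simp only [Function.uncurry]
      rw [this]
      apply integral_mono (Integrable.bdd_mul ((int_aux hY s).add (integrable_const _)) hZ' hb) j4
      intro ω
      have := hu.2
      have := h0 ω
      simp only [Pi.add_apply]
      gcongr
    refine hle.trans (le_of_eq ?_)
    simp [hst]
  have e3 : 4 * ((t - s) * ∫ ω, Z ω * (Y s ω + δ * (t - s)) ∂μ)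
      ≤ 4 / δ * ∫ ω, Z ω * (Y s ω + δ * (t - s)) ^ 2 ∂μ := by
    rw [← mul_assoc, ← integral_const_mul, ← integral_const_mul]
    apply integral_mono (j4.const_mul _) (j7.const_mul _)
    intro ω
    have h1 := h0 ω
    have h2 := hY.nonneg s ω
    have h3 : 0 ≤ t - s := by linarith
    have h4 : 0 ≤ δ * (t - s) := by positivity
    have h5 : 4 * (t - s) = 4 / δ * (δ * (t - s)) := by field_simp
    simp only
    rw [h5, mul_assoc]
    apply mul_le_mul_of_nonneg_left _ (by positivity)
    have : δ * (t - s) * (Y s ω + δ * (t - s)) ≤ (Y s ω + δ * (t - s)) ^ 2 := by nlinarith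
    nlinarith [mul_le_mul_of_nonneg_left this h1]
  rw [e1]
  linarith

/-- conditional Paley–Zygmund -/
lemma pz_aux (hY : IsBESQ μ ℱ δ y Y) (hδ : 0 < δ) {s t : ℝ} (hs : 0 ≤ s) (hst : s < t)
    (G : Set Ω) (hG : MeasurableSet[ℱ s] G) :
    δ / (δ + 4) / 4 * μ.real G ≤ μ.real (G ∩ {ω | δ * (t - s) / 2 ≤ Y t ω}) := by
  set q := δ / (δ + 4) with hq
  have hq0 : 0 < q := by positivity
  have hh : 0 < δ * (t - s) := mul_pos hδ (by linarith)
  set M : Ω → ℝ := fun ω => Y s ω + δ * (t - s) with hM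
  have hMpos : ∀ ω, δ * (t - s) ≤ M ω := fun ω => by have := hY.nonneg s ω; simp [hM, this]
  have hMm : Measurable[ℱ s] M := (hY.adapted s).add_const _
  have hGm : MeasurableSet G := ℱ.le s G hG
  have hM0 : ∀ ω, 0 < M ω := fun ω => hh.trans_le (hMpos ω)
  set Z1 : Ω → ℝ := G.indicator fun ω => (M ω)⁻¹ with hZ1
  set Z2 : Ω → ℝ := G.indicator fun ω => (M ω ^ 2)⁻¹ with hZ2
  have m1 : StronglyMeasurable[ℱ s] Z1 := (hMm.inv.stronglyMeasurable).indicator hG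
  have m2 : StronglyMeasurable[ℱ s] Z2 := ((hMm.pow_const 2).inv.stronglyMeasurable).indicator hG
  have p1 : ∀ ω, 0 ≤ Z1 ω := fun ω => indicator_nonneg (fun ω _ => by have := hM0 ω; positivity) ω
  have p2 : ∀ ω, 0 ≤ Z2 ω := fun ω => indicator_nonneg (fun ω _ => by have := hM0 ω; positivity) ω
  have b1 : ∀ ω, |Z1 ω| ≤ (δ * (t - s))⁻¹ := fun ω => by
    rw [abs_of_nonneg (p1 ω)]
    apply indicator_le' (g := fun _ => (δ * (t - s))⁻¹)
    · intro ω _; exact inv_anti₀ hh (hMpos ω)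
    · intro ω _; positivity
  have b2 : ∀ ω, |Z2 ω| ≤ ((δ * (t - s)) ^ 2)⁻¹ := fun ω => by
    rw [abs_of_nonneg (p2 ω)]
    apply indicator_le' (g := fun _ => ((δ * (t - s)) ^ 2)⁻¹)
    · intro ω _; exact inv_anti₀ (by positivity) (pow_le_pow_left₀ hh.le (hMpos ω) 2)
    · intro ω _; positivity
  have f1 := first_aux hY hs hst.le Z1 m1 _ b1
  have f2 := second_aux hY hδ hs hst.le Z2 m2 _ b2 p2
  have g1 : ∫ ω, Z1 ω * (Y s ω + δ * (t - s)) ∂μ = μ.real G := by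
    rw [← integral_indicator_one hGm]
    congr 1; ext ω
    have := (hM0 ω).ne'
    by_cases h : ω ∈ G
    · simp only [hZ1, indicator_of_mem h, Pi.one_apply]; exact inv_mul_cancel₀ this
    · simp [hZ1, h]
  have g2 : ∫ ω, Z2 ω * (Y s ω + δ * (t - s)) ^ 2 ∂μ = μ.real G := by
    rw [← integral_indicator_one hGm]
    congr 1; ext ω
    have := (hM0 ω).ne'
    by_cases h : ω ∈ G
    · simp only [hZ2, indicator_of_mem h, Pi.one_apply]; exact inv_mul_cancel₀ (pow_ne_zero 2 this)
    · simp [hZ2, h]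
  rw [g1] at f1
  rw [g2] at f2
  have hSm : MeasurableSet (G ∩ {ω | δ * (t - s) / 2 ≤ Y t ω}) :=
    hGm.inter (measurableSet_le measurable_const (meas_aux hY t))
  have i1 : Integrable (fun ω => Z1 ω * Y t ω) μ := Integrable.bdd_mul (int_aux hY t)
    (m1.mono (ℱ.le s)).aestronglyMeasurable (ae_of_all _ b1)
  have i2 : Integrable (fun ω => Z2 ω * Y t ω ^ 2) μ := Integrable.bdd_mul (hY.integrable_sq t)
    (m2.mono (ℱ.le s)).aestronglyMeasurable (ae_of_all _ b2)
  have iG : Integrable (G.indicator (1 : Ω → ℝ)) μ := (integrable_const (1:ℝ)).indicator hGm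
  have i0 : Integrable (fun _ : Ω => (0:ℝ)) μ := integrable_const 0
  have hlin := lin_aux i0 i1 iG i2 q (-(q / 2)) (q ^ 2 / 4)
  have ii : Integrable (fun ω => (fun _ : Ω => (0:ℝ)) ω + q * (Z1 ω * Y t ω)
      + -(q / 2) * G.indicator (1 : Ω → ℝ) ω - q ^ 2 / 4 * (Z2 ω * Y t ω ^ 2)) μ :=
    ((i0.add (i1.const_mul _)).add (iG.const_mul _)).sub (i2.const_mul _)
  have key : ∫ ω, ((fun _ : Ω => (0:ℝ)) ω + q * (Z1 ω * Y t ω)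
      + -(q / 2) * G.indicator (1 : Ω → ℝ) ω - q ^ 2 / 4 * (Z2 ω * Y t ω ^ 2)) ∂μ ≤ μ.real (G ∩ {ω | δ * (t - s) / 2 ≤ Y t ω}) := by
    rw [← integral_indicator_one hSm]
    apply integral_mono ii ((integrable_const (1:ℝ)).indicator hSm)
    intro ω
    by_cases h : ω ∈ G
    swap
    · simp [hZ1, hZ2, h]
    have hm := hM0 ω
    have hr : (M ω ^ 2)⁻¹ * Y t ω ^ 2 = ((M ω)⁻¹ * Y t ω) ^ 2 := by rw [mul_pow, inv_pow]
    simp only [hZ1, hZ2, indicator_of_mem h, Pi.one_apply, hr]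
    set r := (M ω)⁻¹ * Y t ω with hrdef
    by_cases h' : δ * (t - s) / 2 ≤ Y t ω
    · rw [indicator_of_mem (show ω ∈ G ∩ {ω | δ * (t - s) / 2 ≤ Y t ω} from ⟨h, h'⟩)]
      nlinarith [sq_nonneg (q * r - 2)]
    · rw [indicator_of_notMem (fun hh => h' hh.2)]
      have : r ≤ 1 / 2 := by
        rw [hrdef, inv_mul_le_iff₀ hm]
        push Not at h'
        have := hMpos ω
        linarith
      nlinarith [sq_nonneg (q * r)]
  rw [hlin, integral_indicator_one hGm, f1, integral_zero] at key
  have hq1 : q * (1 + 4 / δ) = 1 := by rw [hq]; field_simp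
  have : q ^ 2 / 4 * ∫ ω, Z2 ω * Y t ω ^ 2 ∂μ ≤ q / 4 * μ.real G := by
    calc _ ≤ q ^ 2 / 4 * ((1 + 4 / δ) * μ.real G) := by gcongr
      _ = q / 4 * (q * (1 + 4 / δ)) * μ.real G := by ring
      _ = _ := by rw [hq1, mul_one]
  linarith

end helpers

section helpers2
set_option linter.unusedSectionVars false
variable {Ω : Type*} {m : MeasurableSpace Ω} {μ : Measure Ω} [IsProbabilityMeasure μ]
    {ℱ : Filtration ℝ m} {δ y : ℝ} {Y : ℝ → Ω → ℝ}

/-- time in `(3s/2, 2s]` spent by `Y` above level `δ s / 4` -/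
noncomputable def occ (δ : ℝ) (Y : ℝ → Ω → ℝ) (s : ℝ) (ω : Ω) : ℝ :=
  ∫ u in Ioc (3 * s / 2) (2 * s), (Ici (δ * s / 4)).indicator (1 : ℝ → ℝ) (Y u ω)

lemma phi_meas (a : ℝ) : Measurable ((Ici a).indicator (1 : ℝ → ℝ)) :=
  measurable_one.indicator measurableSet_Ici

lemma phi_nonneg (a x : ℝ) : 0 ≤ (Ici a).indicator (1 : ℝ → ℝ) x :=
  indicator_nonneg (fun _ _ => zero_le_one) x

lemma phi_le (a x : ℝ) : (Ici a).indicator (1 : ℝ → ℝ) x ≤ 1 :=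
  indicator_le' (g := fun _ => (1:ℝ)) (fun _ _ => le_rfl) (fun _ _ => zero_le_one) x

lemma occ_meas (hY : IsBESQ μ ℱ δ y Y) (s : ℝ) : Measurable[ℱ (2 * s)] (occ δ Y s) := by
  have h1 : @Measurable (ℝ × Ω) ℝ (@Prod.instMeasurableSpace _ _ _ (ℱ (2 * s))) _
      (Function.uncurry fun u ω => Y (min u (2 * s)) ω) :=
    @measurable_uncurry_of_continuous_of_measurable Ω ℝ ℝ _ _ _ _ _ _ _ _ _ (ℱ (2 * s)) _
      (fun ω => (hY.cont ω).comp (by fun_prop))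
      (fun u => (hY.adapted _).mono (ℱ.mono (min_le_right _ _)) le_rfl)
  have h2 := ((phi_meas (δ * s / 4)).comp h1).stronglyMeasurable
  have h3 := @StronglyMeasurable.integral_prod_left' ℝ Ω ℝ _ (ℱ (2 * s))
    (volume.restrict (Ioc (3 * s / 2) (2 * s))) _ _ _ _ h2
  have h4 : occ δ Y s = fun ω => ∫ u in Ioc (3 * s / 2) (2 * s),
      ((Ici (δ * s / 4)).indicator (1 : ℝ → ℝ) ∘ Function.uncurry fun u ω => Y (min u (2 * s)) ω)
        (u, ω) := by
    ext ω
    apply setIntegral_congr_fun measurableSet_Ioc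
    intro u hu
    simp [min_eq_left hu.2]
  rw [h4]
  exact h3.measurable

lemma occ_le {s : ℝ} (hs : 0 < s) (ω : Ω) : occ δ Y s ω ≤ s / 2 := by
  have h := norm_setIntegral_le_of_norm_le_const (μ := volume)
    (s := Ioc (3 * s / 2) (2 * s)) (C := 1)
    (f := fun u => (Ici (δ * s / 4)).indicator (1 : ℝ → ℝ) (Y u ω)) (by simp) (fun u _ => by
      rw [Real.norm_of_nonneg (phi_nonneg _ _)]; exact phi_le _ _)
  refine (le_abs_self _).trans (h.trans ?_)
  rw [Real.volume_real_Ioc_of_le (by linarith)]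
  linarith

lemma occ_nonneg {s : ℝ} (ω : Ω) : 0 ≤ occ δ Y s ω :=
  integral_nonneg (fun _ => phi_nonneg _ _)

lemma occ_step (hY : IsBESQ μ ℱ δ y Y) (hδ : 0 < δ) {s : ℝ} (hs : 0 < s)
    (G : Set Ω) (hG : MeasurableSet[ℱ s] G) :
    μ.real (G ∩ {ω | occ δ Y s ω < s * (δ / (δ + 4)) / 16})
      ≤ (1 - δ / (δ + 4) / 8) * μ.real G := by
  set q := δ / (δ + 4) with hq
  have hq0 : 0 < q := by positivity
  have hGm : MeasurableSet G := ℱ.le s G hG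
  have hom : Measurable (occ δ Y s) := (occ_meas hY s).mono (ℱ.le _) le_rfl
  set F := {ω | occ δ Y s ω < s * q / 16} with hF
  have hFm : MeasurableSet F := measurableSet_lt hom measurable_const
  set f : ℝ → Ω → ℝ := fun u => G.indicator
    (fun ω => (Ici (δ * s / 4)).indicator (1 : ℝ → ℝ) (Y u ω)) with hf
  have hfe : Function.uncurry f = (Prod.snd ⁻¹' G : Set (ℝ × Ω)).indicator
      (fun p => (Ici (δ * s / 4)).indicator (1 : ℝ → ℝ) (Function.uncurry Y p)) := by
    ext ⟨u, ω⟩; rfl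
  have hfm : Measurable (Function.uncurry f) := by
    rw [hfe]
    exact ((phi_meas _).comp (joint_aux hY)).indicator (measurable_snd hGm)
  have hfb : ∀ p, ‖Function.uncurry f p‖ ≤ 1 := by
    rintro ⟨u, ω⟩
    by_cases h : ω ∈ G
    · simp only [Function.uncurry, hf, indicator_of_mem h]
      rw [Real.norm_of_nonneg (phi_nonneg _ _)]; exact phi_le _ _
    · simp [Function.uncurry, hf, h]
  have hfi : Integrable (Function.uncurry f)
      ((volume.restrict (Ioc (3 * s / 2) (2 * s))).prod μ) :=
    Integrable.of_bound hfm.aestronglyMeasurable 1 (ae_of_all _ hfb)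
  have hsw := integral_integral_swap hfi
  have hR : ∫ ω, (∫ u in Ioc (3 * s / 2) (2 * s), f u ω) ∂μ = ∫ ω, G.indicator (occ δ Y s) ω ∂μ := by
    congr 1; ext ω
    by_cases h : ω ∈ G
    · simp [hf, h, occ]
    · simp [hf, h]
  have hL : (s / 2) * (q / 4 * μ.real G) ≤ ∫ u in Ioc (3 * s / 2) (2 * s), ∫ ω, f u ω ∂μ := by
    have h1 : ∫ u in Ioc (3 * s / 2) (2 * s), q / 4 * μ.real G = (s / 2) * (q / 4 * μ.real G) := by
      rw [setIntegral_const, Real.volume_real_Ioc_of_le (by linarith), smul_eq_mul]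
      ring
    rw [← h1]
    apply setIntegral_mono_on (integrable_const _) hfi.integral_prod_left measurableSet_Ioc
    intro u hu
    have hsu : s < u := by linarith [hu.1]
    refine (pz_aux hY hδ hs.le hsu G hG).trans ?_
    have hSm : MeasurableSet (G ∩ {ω | δ * (u - s) / 2 ≤ Y u ω}) :=
      hGm.inter (measurableSet_le measurable_const (meas_aux hY u))
    rw [← integral_indicator_one hSm]
    apply integral_mono ((integrable_const (1:ℝ)).indicator hSm)
    · exact Integrable.of_bound (hfm.comp measurable_prodMk_left).aestronglyMeasurable 1
        (ae_of_all _ fun ω => hfb (u, ω))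
    intro ω
    by_cases h : ω ∈ G ∩ {ω | δ * (u - s) / 2 ≤ Y u ω}
    · have h2 : Y u ω ∈ Ici (δ * s / 4) := by
        have := h.2
        simp only [mem_ofPred_eq] at this
        simp only [mem_Ici]
        nlinarith [hu.1]
      simp [indicator_of_mem h, Function.uncurry, hf, indicator_of_mem h.1, indicator_of_mem h2]
    · rw [indicator_of_notMem h]
      exact indicator_nonneg (fun _ _ => phi_nonneg _ _) ω
  have hU : ∫ ω, G.indicator (occ δ Y s) ω ∂μ
      ≤ s * q / 16 * μ.real G + s / 2 * μ.real (G \ F) := by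
    rw [← integral_indicator_one hGm, ← integral_indicator_one (hGm.diff hFm),
      ← integral_const_mul, ← integral_const_mul]
    have a1 : Integrable (G.indicator (1 : Ω → ℝ)) μ := (integrable_const (1:ℝ)).indicator hGm
    have a2 : Integrable ((G \ F).indicator (1 : Ω → ℝ)) μ :=
      (integrable_const (1:ℝ)).indicator (hGm.diff hFm)
    rw [← integral_add (a1.const_mul _) (a2.const_mul _)]
    apply integral_mono
    · apply Integrable.indicator _ hGm
      apply Integrable.of_bound hom.aestronglyMeasurable (s / 2) (ae_of_all _ fun ω => ?_)
      rw [Real.norm_of_nonneg (occ_nonneg ω)]; exact occ_le hs ω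
    · exact (a1.const_mul _).add (a2.const_mul _)
    intro ω
    have hsq : 0 < s * q / 16 := by positivity
    by_cases h : ω ∈ G
    · by_cases h' : ω ∈ F
      · have h3 : ω ∉ G \ F := fun hh => hh.2 h'
        have : occ δ Y s ω < s * q / 16 := h'
        simp only [indicator_of_mem h, indicator_of_notMem h3, Pi.one_apply]
        linarith
      · have h3 : ω ∈ G \ F := ⟨h, h'⟩
        have := occ_le (δ := δ) (Y := Y) hs ω
        simp only [indicator_of_mem h, indicator_of_mem h3, Pi.one_apply]
        linarith
    · simp [h]
  have hsplit := measureReal_inter_add_sdiff (μ := μ) (s := G) hFm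
  rw [← hR, ← hsw] at hU
  have h5 := hL.trans hU
  have h6 : s / 2 * (q / 8 * μ.real G) ≤ s / 2 * μ.real (G \ F) := by linarith
  have h7 := le_of_mul_le_mul_left h6 (by positivity)
  linarith

lemma iter_aux (hY : IsBESQ μ ℱ δ y Y) (hδ : 0 < δ) (k n : ℕ) :
    MeasurableSet[ℱ (2 ^ (k + n))]
      {ω | ∀ i < n, occ δ Y (2 ^ (k + i)) ω < 2 ^ (k + i) * (δ / (δ + 4)) / 16} ∧
    μ.real {ω | ∀ i < n, occ δ Y (2 ^ (k + i)) ω < 2 ^ (k + i) * (δ / (δ + 4)) / 16}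
      ≤ (1 - δ / (δ + 4) / 8) ^ n := by
  induction n with
  | zero => simp
  | succ n ih =>
    have he : {ω | ∀ i < n + 1, occ δ Y (2 ^ (k + i)) ω < 2 ^ (k + i) * (δ / (δ + 4)) / 16}
        = {ω | ∀ i < n, occ δ Y (2 ^ (k + i)) ω < 2 ^ (k + i) * (δ / (δ + 4)) / 16}
          ∩ {ω | occ δ Y (2 ^ (k + n)) ω < 2 ^ (k + n) * (δ / (δ + 4)) / 16} := by
      ext ω
      simp only [mem_ofPred_eq, mem_inter_iff]
      exact Nat.forall_lt_succ_right
    rw [he]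
    have e2 : (2 : ℝ) ^ (k + (n + 1)) = 2 * 2 ^ (k + n) := by ring
    constructor
    · rw [e2]
      apply MeasurableSet.inter
      · exact ℱ.mono (by have : (0:ℝ) < 2 ^ (k + n) := by positivity
                         linarith) _ ih.1
      · exact @measurableSet_lt _ _ _ _ _ (ℱ (2 * 2 ^ (k + n))) _ _ _ _ _ (occ_meas hY _)
          (@measurable_const _ _ _ (ℱ (2 * 2 ^ (k + n))) _)
    · refine (occ_step hY hδ (by positivity) _ ih.1).trans ?_
      have : 0 ≤ 1 - δ / (δ + 4) / 8 := by
        have : δ / (δ + 4) ≤ 1 := by rw [div_le_one (by positivity)]; linarith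
        linarith
      rw [pow_succ, mul_comm]
      gcongr
      exact ih.2

lemma det_aux (hY : IsBESQ μ ℱ δ y Y) (hδ : 0 < δ) {α γ : ℝ} (hα : 0 ≤ α) {s t : ℝ}
    (hs : 1 ≤ s) (hst : 2 * s ≤ t) (ω : Ω)
    (h : s * (δ / (δ + 4)) / 16 ≤ occ δ Y s ω) :
    (2 ^ (-|γ|) * (δ / 4) ^ α * (δ / (δ + 4) / 16)) * s ^ (1 + γ + α)
      ≤ ∫ u in (1:ℝ)..t, u ^ γ * (Y u ω) ^ α := by
  have hs0 : 0 < s := by linarith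
  have hc : ContinuousOn (fun u => u ^ γ * (Y u ω) ^ α) (Ici 1) := by
    apply ContinuousOn.mul
    · exact continuousOn_id.rpow_const (fun x hx => Or.inl (by
        have : (1:ℝ) ≤ x := hx
        simp only [id]; linarith))
    · exact ((hY.cont ω).rpow_const (fun _ => Or.inr hα)).continuousOn
  have hi : ∀ a b, 1 ≤ a → IntegrableOn (fun u => u ^ γ * (Y u ω) ^ α) (Ioc a b) := fun a b ha =>
    ((hc.mono (fun x hx => ha.trans hx.1)).integrableOn_Icc).mono_set Ioc_subset_Icc_self
  rw [intervalIntegral.integral_of_le (by linarith)]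
  have h1 : ∫ u in Ioc (3 * s / 2) (2 * s), u ^ γ * (Y u ω) ^ α
      ≤ ∫ u in Ioc 1 t, u ^ γ * (Y u ω) ^ α := by
    apply setIntegral_mono_set (hi 1 t le_rfl)
    · filter_upwards [ae_restrict_mem measurableSet_Ioc] with u hu
      have : 0 < u := by linarith [hu.1]
      have := hY.nonneg u ω
      simp only [Pi.zero_apply]
      positivity
    · exact (Ioc_subset_Ioc (by linarith) hst).eventuallyLE
  refine le_trans ?_ h1
  have h2 : ∫ u in Ioc (3 * s / 2) (2 * s), (2 ^ (-|γ|) * s ^ γ * (δ * s / 4) ^ α) *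
      (Ici (δ * s / 4)).indicator (1 : ℝ → ℝ) (Y u ω) ≤
      ∫ u in Ioc (3 * s / 2) (2 * s), u ^ γ * (Y u ω) ^ α := by
    apply setIntegral_mono_on _ (hi _ _ (by linarith)) measurableSet_Ioc
    · intro u hu
      have hu0 : 0 < u := by linarith [hu.1]
      have hY0 := hY.nonneg u ω
      by_cases h : Y u ω ∈ Ici (δ * s / 4)
      · rw [indicator_of_mem h]
        simp only [Pi.one_apply, mul_one]
        have h3 : (δ * s / 4) ^ α ≤ (Y u ω) ^ α :=
          Real.rpow_le_rpow (by positivity) h hα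
        have h4 : 2 ^ (-|γ|) * s ^ γ ≤ u ^ γ := by
          have e : u ^ γ = (u / s) ^ γ * s ^ γ := by
            rw [← Real.mul_rpow (by positivity) hs0.le, div_mul_cancel₀ _ hs0.ne']
          rw [e]
          gcongr
          have v1 : 1 ≤ u / s := by rw [le_div_iff₀ hs0]; linarith [hu.1]
          have v2 : u / s ≤ 2 := by rw [div_le_iff₀ hs0]; linarith [hu.2]
          calc (2:ℝ) ^ (-|γ|) ≤ (u / s) ^ (-|γ|) :=
                Real.rpow_le_rpow_of_nonpos (by linarith) v2 (by simp)
            _ ≤ (u / s) ^ γ := Real.rpow_le_rpow_of_exponent_le v1 (neg_abs_le γ)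
        gcongr
      · rw [indicator_of_notMem h]
        simp only [mul_zero]
        positivity
    · apply Integrable.const_mul
      apply Integrable.of_bound (C := 1)
      · exact ((phi_meas _).comp (hY.cont ω).measurable).aestronglyMeasurable
      · exact ae_of_all _ fun u => by
          rw [Real.norm_of_nonneg (phi_nonneg _ _)]; exact phi_le _ _
  refine le_trans ?_ h2
  rw [integral_const_mul]
  change _ ≤ _ * occ δ Y s ω
  calc _ = 2 ^ (-|γ|) * s ^ γ * (δ * s / 4) ^ α * (s * (δ / (δ + 4)) / 16) := by
        rw [show δ * s / 4 = δ / 4 * s by ring, Real.mul_rpow (by positivity) hs0.le,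
          Real.rpow_add hs0, Real.rpow_add hs0, Real.rpow_one]
        ring
    _ ≤ _ := by gcongr

end helpers2

theorem stmt_12 {Ω : Type*} {m : MeasurableSpace Ω} (μ : Measure Ω) [IsProbabilityMeasure μ]
    (ℱ : Filtration ℝ m) (δ y : ℝ) (hδ : 0 < δ) (hy : 0 ≤ y)
    (Y : ℝ → Ω → ℝ) (hY : IsBESQ μ ℱ δ y Y)
    (α γ : ℝ) (hα : 0 ≤ α) (hγ : -α < γ) :
    ∀ ε > (0:ℝ), ∀ᵐ ω ∂μ, ∀ᶠ t : ℝ in atTop,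
      t ^ (1 + γ + α - ε) < ∫ s in (1:ℝ)..t, s ^ γ * (Y s ω) ^ α := by
  intro ε hε
  set q := δ / (δ + 4) with hq
  have hq0 : 0 < q := by positivity
  have hq1 : q ≤ 1 := by rw [hq, div_le_one (by positivity)]; linarith
  set β := 1 + γ + α with hβ
  have hβ0 : 0 < β := by linarith
  set c := 2 ^ (-|γ|) * (δ / 4) ^ α * (q / 16) with hc
  have hc0 : 0 < c := by positivity
  obtain ⟨N, hN⟩ := exists_nat_gt (β / ε)
  have hN' : β < N * ε := by rwa [div_lt_iff₀ hε] at hN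
  set B : ℕ → Set Ω := fun j =>
    {ω | ∀ i < j, occ δ Y (2 ^ (N * j + i)) ω < 2 ^ (N * j + i) * q / 16} with hB
  have hBC : ∑' j, μ (B j) ≠ ⊤ := by
    have hr0 : 0 ≤ 1 - q / 8 := by linarith
    have hr1 : 1 - q / 8 < 1 := by linarith
    have hle : ∀ j, μ (B j) ≤ ENNReal.ofReal ((1 - q / 8) ^ j) := fun j => by
      rw [← ofReal_measureReal]
      exact ENNReal.ofReal_le_ofReal (iter_aux hY hδ (N * j) j).2
    refine ne_top_of_le_ne_top ?_ (ENNReal.tsum_le_tsum hle)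
    exact (summable_geometric_of_lt_one hr0 hr1).tsum_ofReal_ne_top
  filter_upwards [ae_eventually_notMem hBC] with ω hω
  have hl2 : 0 < Real.log 2 := Real.log_pos (by norm_num)
  have hD : 0 < ((N : ℝ) + 1) * Real.log 2 := by positivity
  have hjt : Tendsto (fun t : ℝ => ⌊Real.log t / (((N : ℝ) + 1) * Real.log 2)⌋₊) atTop atTop :=
    tendsto_nat_floor_atTop.comp (Real.tendsto_log_atTop.atTop_div_const hD)
  have hlin : ∀ᶠ t in atTop, (β * N * Real.log 2 - Real.log c) <
      (β * N / (N + 1) - (β - ε)) * Real.log t := by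
    have hp : 0 < β * N / (N + 1) - (β - ε) := by
      rw [sub_pos, lt_div_iff₀ (by positivity)]
      nlinarith
    exact (Real.tendsto_log_atTop.const_mul_atTop hp).eventually_gt_atTop _
  filter_upwards [hjt.eventually hω, hlin, eventually_ge_atTop 1] with t h1 h2 h3
  have ht0 : 0 < t := by linarith
  set j := ⌊Real.log t / (((N : ℝ) + 1) * Real.log 2)⌋₊ with hj
  have hlog0 : 0 ≤ Real.log t := Real.log_nonneg h3
  have hj1 : (j : ℝ) * (((N : ℝ) + 1) * Real.log 2) ≤ Real.log t := by
    rw [← le_div_iff₀ hD]; exact Nat.floor_le (by positivity)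
  have hj2 : Real.log t < ((j : ℝ) + 1) * (((N : ℝ) + 1) * Real.log 2) := by
    rw [← div_lt_iff₀ hD]; exact Nat.lt_floor_add_one _
  simp only [hB, mem_ofPred_eq, not_forall, not_lt] at h1
  obtain ⟨i, hi, h4⟩ := h1
  have hpow : ((2:ℝ) ^ (N * j + i)) = Real.exp (((N * j + i : ℕ) : ℝ) * Real.log 2) := by
    rw [Real.exp_nat_mul, Real.exp_log (by norm_num)]
  have h2s : 2 * (2:ℝ) ^ (N * j + i) ≤ t := by
    rw [← Real.exp_log ht0]
    calc 2 * (2:ℝ) ^ (N * j + i) = Real.exp (((N * j + i + 1 : ℕ) : ℝ) * Real.log 2) := by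
          rw [Real.exp_nat_mul, Real.exp_log (by norm_num)]; ring
      _ ≤ _ := by
          apply Real.exp_le_exp.2
          refine le_trans ?_ hj1
          rw [← mul_assoc]
          gcongr
          have : N * j + i + 1 ≤ j * (N + 1) := by nlinarith
          exact_mod_cast this
  refine lt_of_lt_of_le ?_ (det_aux (γ := γ) hY hδ hα (one_le_pow₀ (by norm_num)) h2s ω h4)
  rw [← hβ, hpow, ← Real.exp_mul, Real.rpow_def_of_pos ht0]
  change _ < c * _
  nth_rewrite 1 [← Real.exp_log hc0]
  rw [← Real.exp_add]
  apply Real.exp_lt_exp.2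
  push_cast
  have hNj : β * N / (N + 1) * Real.log t ≤ β * N * ((j + 1) * Real.log 2) := by
    rw [div_mul_eq_mul_div, div_le_iff₀ (by positivity)]
    have : β * N * Real.log t ≤ β * N * (((j : ℝ) + 1) * (((N : ℝ) + 1) * Real.log 2)) := by gcongr
    linarith
  have hip : 0 ≤ (i : ℝ) * Real.log 2 * β := by positivity
  linarith
end
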